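/- arXiv:1604.05433 — 4 statements merged into one kernel-verified Lean document; each statement's English description precedes it below -/
import Mathlib

section
/- Let O be a simply connected domain (nonempty, open, connected, simply connected subset) in the complex plane and let p ∈ O. The integration operator J_p, defined by J_p f(z) = ∫_p^z f(ζ) dζ (the integral being path-independent since O is simply connected), is a bounded operator on H^∞(O) if and only if the interior diameter diam_I O is finite. Equivalently: there exists a constant C such that for every analytic f : O → ℂ with |f| ≤ 1 on O and every analytic F : O → ℂ with F(p) = 0 and F' = f on O one has |F(z)| ≤ C for all z ∈ O, if and only if diam_I O < ∞. -/
/-!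
If the interior diameter is finite, integrating `f` along a short path bounds every normalised
primitive (`exists_bound_of_interiorDiam_lt_top`).

For the converse, suppose integration is bounded. Taking `f = 1` shows that `O` is bounded. Given
`z₀, z₁ ∈ O`, the idea is to join them by a hyperbolic geodesic and to find a bounded analytic `f`
whose integral along the geodesic is comparable with its length.

* Conformal coordinates (`exists_stripCoord`): a conformal map `W` of `O` into the strip
  `|Im| < π / 2` whose image contains a neighbourhood of a real segment `[0, S]`, with inverse `Ψ`
  such that `Ψ 0 = z₀` and `Ψ S = z₁`. The full Riemann mapping theorem is avoided: a nearly
  extremal competitor in Koebe's extremal problem already covers a given compact part of the disc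
  (`exists_conf`), and this suffices here.
* Distortion (`weak_koebe`, `StripCoord.norm_deriv_deriv_le`): a weak Koebe theorem bounds `|Ψ'|`
  above by the distance to the boundary, the Schwarz lemma bounds it below, and the Cauchy estimate
  gives `|Ψ'' / Ψ'| ≤ K` on the segment with `K` an absolute constant. So `arg Ψ'`, as a function of
  `s ∈ [0, S]`, is `K`-Lipschitz.
* Smoothing (`exists_entire_approx`): a bounded `K`-Lipschitz function on the line is within `1` of an
  entire function `g`, a Gaussian convolution, with `|Im g| ≤ A` on the strip, where `A` depends only
  on `K`.
* Testing (`StripCoord.length_le`): `f = exp (-A - i g(W))` is bounded by `1` on `O`, and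
  `f(Ψ) Ψ'` has argument within `1 < π / 2` of zero on the segment. Therefore the length
  `∫ |Ψ'|` is at most a fixed multiple of `|F z₁ - F z₀|`, for `F` a primitive of `f`.

Primitives on `O` come from `exists_primitive`, which patches primitives on conformal discs that
exhaust `O`.
-/

/-- The interior diameter of a plane domain `O`: the supremum over pairs of points of `O`
of the infimum of lengths of smooth paths in `O` joining them. -/
noncomputable def interiorDiam (O : Set ℂ) : ENNReal :=
  ⨆ z₀ ∈ O, ⨆ z₁ ∈ O,
    ⨅ γ ∈ {γ : ℝ → ℂ | ContDiff ℝ 1 γ ∧ γ 0 = z₀ ∧ γ 1 = z₁ ∧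
        ∀ t ∈ Set.Icc (0:ℝ) 1, γ t ∈ O},
      ENNReal.ofReal (∫ t in (0:ℝ)..1, ‖deriv γ t‖)

namespace HInf
open Complex Metric Set Filter Topology ComplexConjugate

/-! ### Schwarz–Pick and Harnack estimates, square roots -/

/-- The disc automorphism `z ↦ (z - a) / (1 - conj a * z)`, which moves `a` to `0`. -/
noncomputable def mob (a z : ℂ) : ℂ := (z - a) / (1 - conj a * z)

lemma mob_denom_ne {a z : ℂ} (ha : ‖a‖ < 1) (hz : ‖z‖ < 1) : 1 - conj a * z ≠ 0 := by
  intro h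
  have h1 : ‖conj a * z‖ = 1 := by rw [← sub_eq_zero.1 h]; simp
  rw [norm_mul, norm_conj] at h1
  nlinarith [norm_nonneg a, norm_nonneg z]

lemma norm_mob_lt_one {a z : ℂ} (ha : ‖a‖ < 1) (hz : ‖z‖ < 1) : ‖mob a z‖ < 1 := by
  have hd := mob_denom_ne ha hz
  rw [mob, norm_div, div_lt_one (norm_pos_iff.2 hd), ← sq_lt_sq₀ (norm_nonneg _) (norm_nonneg _)]
  have ha' : ‖a‖ ^ 2 < 1 := by nlinarith [norm_nonneg a]
  have hz' : ‖z‖ ^ 2 < 1 := by nlinarith [norm_nonneg z]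
  rw [Complex.sq_norm, Complex.normSq_apply] at ha' hz' ⊢
  rw [Complex.sq_norm, Complex.normSq_apply]
  simp only [sub_re, sub_im, mul_re, mul_im, conj_re, conj_im, one_re, one_im]
  nlinarith

lemma mob_injective {a z w : ℂ} (ha : ‖a‖ < 1) (hz : ‖z‖ < 1) (hw : ‖w‖ < 1)
    (h : mob a z = mob a w) : z = w := by
  rw [mob, mob, div_eq_div_iff (mob_denom_ne ha hz) (mob_denom_ne ha hw)] at h
  have h1 : (z - w) * (1 - conj a * a) = 0 := by linear_combination h
  rcases mul_eq_zero.1 h1 with h2 | h2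
  · exact sub_eq_zero.1 h2
  · exact absurd h2 (mob_denom_ne ha ha)

lemma mob_self (a : ℂ) : mob a a = 0 := by simp [mob]

lemma mob_zero (a : ℂ) : mob a 0 = -a := by simp [mob]

lemma mob_eq_zero {a z : ℂ} (ha : ‖a‖ < 1) (hz : ‖z‖ < 1) (h : mob a z = 0) : z = a := by
  rw [mob, div_eq_zero_iff, or_iff_left (mob_denom_ne ha hz)] at h
  exact sub_eq_zero.1 h

lemma hasDerivAt_mob {a z : ℂ} (ha : ‖a‖ < 1) (hz : ‖z‖ < 1) :
    HasDerivAt (mob a) ((1 - conj a * a) / (1 - conj a * z) ^ 2) z := by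
  have h1 : HasDerivAt (fun z : ℂ => z - a) 1 z := (hasDerivAt_id z).sub_const a
  have h2 : HasDerivAt (fun z : ℂ => 1 - conj a * z) (-(conj a * 1)) z :=
    ((hasDerivAt_id z).const_mul (conj a)).const_sub 1
  convert! h1.div h2 (mob_denom_ne ha hz) using 1
  ring

/-- A quantitative form of the Schwarz–Pick lemma: the distance of `φ` to the unit circle
changes by at most a factor `2` over a fixed fraction of a disc. -/
lemma schwarz_pick {φ : ℂ → ℂ} {w z : ℂ} {δ : ℝ} (hd : DifferentiableOn ℂ φ (ball w δ))
    (hm : MapsTo φ (ball w δ) (ball 0 1)) (hδ : 0 < δ) (hz : dist z w ≤ δ / 5) :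
    (1 / 2) * (1 - ‖φ w‖) ≤ 1 - ‖φ z‖ ∧ (1 / 2) * (1 - ‖φ z‖) ≤ 1 - ‖φ w‖ := by
  have hzb : z ∈ ball w δ := by rw [mem_ball]; linarith
  have hwb : w ∈ ball w δ := mem_ball_self hδ
  have n1 : ∀ x ∈ ball w δ, ‖φ x‖ < 1 := fun x hx => by simpa using hm hx
  have hdT : DifferentiableOn ℂ (fun x => mob (φ w) (φ x)) (ball w δ) := fun x hx =>
    (((hasDerivAt_mob (n1 w hwb) (n1 x hx)).differentiableAt).comp x
      (hd.differentiableAt (isOpen_ball.mem_nhds hx))).differentiableWithinAt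
  have key := dist_le_div_mul_dist_of_mapsTo_ball (R₂ := 1) hdT (fun x hx => by
    simp only [mob_self, mem_closedBall, dist_zero_right]
    exact (norm_mob_lt_one (n1 w hwb) (n1 x hx)).le) hzb
  simp only [mob_self, dist_zero_right] at key
  have k2 : ‖mob (φ w) (φ z)‖ ≤ 1 / 5 := by
    refine key.trans ?_
    calc 1 / δ * dist z w ≤ 1 / δ * (δ / 5) := by gcongr
      _ = 1 / 5 := by field_simp
  set a := φ w
  set b := φ z
  have ha := n1 w hwb
  have hb := n1 z hzb
  rw [mob, norm_div, div_le_iff₀ (norm_pos_iff.2 (mob_denom_ne ha hb))] at k2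
  have k3 : ‖1 - conj a * b‖ ≤ (1 - ‖a‖ ^ 2) + ‖a‖ * ‖b - a‖ := by
    have e : 1 - conj a * b = ((1 - ‖a‖ ^ 2 : ℝ) : ℂ) - conj a * (b - a) := by
      push_cast
      rw [← Complex.conj_mul']
      ring
    rw [e]
    refine (norm_sub_le _ _).trans ?_
    rw [norm_mul, norm_conj, norm_real, Real.norm_of_nonneg]
    nlinarith [norm_nonneg a]
  have k4 : ‖b - a‖ ≤ (1 - ‖a‖) / 2 := by
    nlinarith [norm_nonneg a, norm_nonneg (b - a)]
  have k5 : ‖b‖ ≤ ‖a‖ + ‖b - a‖ := by simpa using norm_add_le a (b - a)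
  have k6 : ‖a‖ ≤ ‖b‖ + ‖b - a‖ := by
    have := norm_sub_norm_le a b
    rw [norm_sub_rev] at this; linarith
  constructor <;> linarith

/-- Harnack-type inequality, uniform over all analytic maps of a domain into the disc. -/
lemma harnack {O : Set ℂ} (hO : IsOpen O) (hconn : IsConnected O) {x y : ℂ} (hx : x ∈ O)
    (hy : y ∈ O) : ∃ c > 0, ∀ φ : ℂ → ℂ, DifferentiableOn ℂ φ O → MapsTo φ O (ball 0 1) →
      c * (1 - ‖φ x‖) ≤ 1 - ‖φ y‖ := by
  refine hconn.isPreconnected.induction₂' (fun x y => ∃ c > 0, ∀ φ : ℂ → ℂ,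
    DifferentiableOn ℂ φ O → MapsTo φ O (ball 0 1) → c * (1 - ‖φ x‖) ≤ 1 - ‖φ y‖) ?_ ?_ hx hy
  · intro w hw
    obtain ⟨δ, hδ, hb⟩ := Metric.isOpen_iff.1 hO w hw
    filter_upwards [mem_nhdsWithin_of_mem_nhds (closedBall_mem_nhds w (by positivity : 0 < δ / 5))]
      with z hz
    exact ⟨⟨1 / 2, by norm_num, fun φ h1 h2 =>
      (schwarz_pick (h1.mono hb) (h2.mono_left hb) hδ hz).1⟩,
      ⟨1 / 2, by norm_num, fun φ h1 h2 =>
      (schwarz_pick (h1.mono hb) (h2.mono_left hb) hδ hz).2⟩⟩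
  · rintro x y z - - - ⟨c, hc, h⟩ ⟨d, hd, h'⟩
    refine ⟨d * c, by positivity, fun φ h1 h2 => ?_⟩
    have := mul_le_mul_of_nonneg_left (h φ h1 h2) hd.le
    linarith [h' φ h1 h2]

/-- Mathlib provides a continuous square root of a nonvanishing function on a simply connected set;
it is automatically analytic. -/
lemma exists_sqrt {O : Set ℂ} (hO : IsOpen O) (hsc : IsSimplyConnected O) {φ : ℂ → ℂ}
    (hφ : DifferentiableOn ℂ φ O) (h0 : ∀ z ∈ O, φ z ≠ 0) :
    ∃ g : ℂ → ℂ, (∀ z, g z ^ 2 = φ z) ∧ ∀ z ∈ O, HasDerivAt g (deriv φ z / (2 * g z)) z := by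
  obtain ⟨g, hg, hg2⟩ := exists_continuousOn_pow_eq hsc hO hφ.continuousOn
    (by rintro ⟨z, hz, h⟩; exact h0 z hz h) two_ne_zero
  refine ⟨g, hg2, fun z hz => ?_⟩
  have hgz : g z ≠ 0 := fun h => h0 z hz (by rw [← hg2, h]; simp)
  have hcont : Tendsto (fun x => g x + g z) (𝓝 z) (𝓝 (2 * g z)) := by
    rw [two_mul]
    exact (hg.continuousAt (hO.mem_nhds hz)).tendsto.add_const _
  have hne : ∀ᶠ x in 𝓝 z, g x + g z ≠ 0 :=
    hcont.eventually_ne (mul_ne_zero two_ne_zero hgz)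
  have hd := hasDerivAt_iff_tendsto_slope.1
    (hφ.differentiableAt (hO.mem_nhds hz)).hasDerivAt
  rw [hasDerivAt_iff_tendsto_slope]
  refine (hd.div (hcont.mono_left nhdsWithin_le_nhds) (mul_ne_zero two_ne_zero hgz)).congr' ?_
  filter_upwards [nhdsWithin_le_nhds hne] with x hx
  simp only [slope_def_field, Pi.div_apply, ← hg2]
  rw [div_right_comm, sq_sub_sq, mul_div_cancel_left₀ _ hx]

/-! ### Nearly extremal conformal maps onto large parts of the disc -/

/-- Injective analytic maps of `O` into the unit disc vanishing at `p`: the competitors in the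
extremal problem of the Riemann mapping theorem. The condition `deriv φ z ≠ 0` follows from
injectivity; recording it saves proving this implication. -/
structure IsConf (O : Set ℂ) (p : ℂ) (φ : ℂ → ℂ) : Prop where
  diff : DifferentiableOn ℂ φ O
  maps : MapsTo φ O (ball 0 1)
  base : φ p = 0
  inj : InjOn φ O
  der : ∀ z ∈ O, deriv φ z ≠ 0

lemma IsConf.norm_lt {O : Set ℂ} {p : ℂ} {φ : ℂ → ℂ} (h : IsConf O p φ) {z : ℂ} (hz : z ∈ O) :
    ‖φ z‖ < 1 := by simpa using h.maps hz

/-- Koebe's square-root trick: a competitor that omits a value of the disc can be replaced by one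
whose derivative at `p` is larger by a definite factor. -/
lemma koebe_step {O : Set ℂ} (hO : IsOpen O) (hsc : IsSimplyConnected O) {p : ℂ} (hp : p ∈ O)
    {φ : ℂ → ℂ} (h : IsConf O p φ) {a : ℂ} {r : ℝ} (har : ‖a‖ ≤ r) (hr : r < 1)
    (ha : a ∉ φ '' O) :
    ∃ φ₂, IsConf O p φ₂ ∧ (1 + (1 - √r) ^ 2 / 2) * ‖deriv φ p‖ ≤ ‖deriv φ₂ p‖ := by
  have ha1 : ‖a‖ < 1 := har.trans_lt hr
  have ha0 : a ≠ 0 := fun h0 => ha ⟨p, hp, by rw [h.base, h0]⟩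
  have hd1 : ∀ z ∈ O, HasDerivAt (fun z => mob a (φ z))
      ((1 - conj a * a) / (1 - conj a * φ z) ^ 2 * deriv φ z) z := fun z hz =>
    (hasDerivAt_mob ha1 (h.norm_lt hz)).comp z (h.diff.differentiableAt (hO.mem_nhds hz)).hasDerivAt
  obtain ⟨g, hg2, hg⟩ := exists_sqrt hO hsc (φ := fun z => mob a (φ z))
    (fun z hz => (hd1 z hz).differentiableAt.differentiableWithinAt)
    (fun z hz h0 => ha ⟨z, hz, mob_eq_zero ha1 (h.norm_lt hz) h0⟩)
  have hg0 : ∀ z ∈ O, g z ≠ 0 := fun z hz h0 => ha ⟨z, hz, mob_eq_zero ha1 (h.norm_lt hz) (by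
    rw [← hg2, h0]; simp)⟩
  have hg1 : ∀ z ∈ O, ‖g z‖ < 1 := fun z hz => by
    have := norm_mob_lt_one ha1 (h.norm_lt hz)
    rw [← hg2, norm_pow] at this
    exact (pow_lt_one_iff_of_nonneg (norm_nonneg _) two_ne_zero).1 this
  have hgp := hg1 p hp
  have hd2 : ∀ z ∈ O, HasDerivAt (fun z => mob (g p) (g z))
      ((1 - conj (g p) * g p) / (1 - conj (g p) * g z) ^ 2 *
        (((1 - conj a * a) / (1 - conj a * φ z) ^ 2 * deriv φ z) / (2 * g z))) z := fun z hz => by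
    have := (hasDerivAt_mob hgp (hg1 z hz)).comp z (hg z hz)
    rwa [(hd1 z hz).deriv] at this
  refine ⟨fun z => mob (g p) (g z), ⟨fun z hz => (hd2 z hz).differentiableAt.differentiableWithinAt,
    fun z hz => by simpa using norm_mob_lt_one hgp (hg1 z hz), mob_self _, fun z hz w hw hzw => ?_,
    fun z hz => ?_⟩, ?_⟩
  · have e := mob_injective hgp (hg1 z hz) (hg1 w hw) hzw
    have e2 : mob a (φ z) = mob a (φ w) := by rw [← hg2, ← hg2, e]
    exact h.inj hz hw (mob_injective ha1 (h.norm_lt hz) (h.norm_lt hw) e2)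
  · rw [(hd2 z hz).deriv]
    exact mul_ne_zero (div_ne_zero (mob_denom_ne hgp hgp)
      (pow_ne_zero _ (mob_denom_ne hgp (hg1 z hz)))) (div_ne_zero (mul_ne_zero
      (div_ne_zero (mob_denom_ne ha1 ha1) (pow_ne_zero _ (mob_denom_ne ha1 (h.norm_lt hz))))
      (h.der z hz)) (mul_ne_zero two_ne_zero (hg0 z hz)))
  -- with `s = √|a|` the derivative at `p` is multiplied by `(1 + s²) / (2 s)`, in absolute value
  · rw [(hd2 p hp).deriv, h.base]
    have hga : ‖g p‖ ^ 2 = ‖a‖ := by rw [← norm_pow, hg2, h.base, mob_zero, norm_neg]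
    have eg : 1 - conj (g p) * g p = ((1 - ‖g p‖ ^ 2 : ℝ) : ℂ) := by
      rw [Complex.conj_mul']; push_cast; ring
    have ea : 1 - conj a * a = ((1 - (‖g p‖ ^ 2) ^ 2 : ℝ) : ℂ) := by
      rw [Complex.conj_mul', hga]; push_cast; ring
    have hs0 : 0 < ‖g p‖ := norm_pos_iff.2 (hg0 p hp)
    set s := ‖g p‖ with hs
    have hsr : s ≤ √r := Real.le_sqrt_of_sq_le (by rw [hga]; exact har)
    have hr1 : √r < 1 := by
      rw [Real.sqrt_lt' one_pos]; simpa using hr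
    rw [eg, ea]
    have hp1 : 0 < 1 - s ^ 2 := by nlinarith
    have hp2 : 0 < 1 - (s ^ 2) ^ 2 := by nlinarith
    simp only [norm_mul, norm_div, norm_pow, norm_real, mul_zero, sub_zero, one_pow,
      div_one, ← hs, Real.norm_of_nonneg hp1.le, Real.norm_of_nonneg hp2.le, Complex.norm_ofNat]
    have e : (1 - s ^ 2) / (1 - s ^ 2) ^ 2 * ((1 - (s ^ 2) ^ 2) * ‖deriv φ p‖ / (2 * s)) =
        (1 + s ^ 2) / (2 * s) * ‖deriv φ p‖ := by
      field_simp
      ring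
    rw [e]
    gcongr
    rw [le_div_iff₀ (by positivity)]
    have h3 : (1 - √r) ^ 2 ≤ (1 - s) ^ 2 := by gcongr
    nlinarith [sq_nonneg (1 - √r)]

/-- A bounded simply connected domain is mapped conformally into the unit disc with image as close
to the whole disc as desired: take a competitor whose derivative at `p` is nearly maximal. -/
lemma exists_conf {O : Set ℂ} (hO : IsOpen O) (hsc : IsSimplyConnected O) {p : ℂ} (hp : p ∈ O)
    {R : ℝ} (hR : ∀ z ∈ O, ‖z - p‖ < R) {r : ℝ} (hr : r < 1) :
    ∃ φ, IsConf O p φ ∧ ∀ a, ‖a‖ ≤ r → a ∈ φ '' O := by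
  have hR0 : 0 < R := (norm_nonneg _).trans_lt (hR p hp)
  obtain ⟨δ, hδ, hb⟩ := Metric.isOpen_iff.1 hO p hp
  -- the extremal quantity is bounded by the Schwarz lemma on a disc around `p`
  set D : Set ℝ := {x | ∃ φ, IsConf O p φ ∧ x = ‖deriv φ p‖} with hD
  have hbdd : BddAbove D := by
    refine ⟨1 / δ, ?_⟩
    rintro _ ⟨φ, h, rfl⟩
    refine norm_deriv_le_div_of_mapsTo_ball (h.diff.mono hb) (fun x hx => ?_) hδ
    rw [h.base]
    exact ball_subset_closedBall (h.maps (hb hx))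
  have hd0 : ∀ z, HasDerivAt (fun z => (z - p) / (R : ℂ)) (1 / (R : ℂ)) z := fun z =>
    ((hasDerivAt_id z).sub_const p).div_const _
  have hRC : (R : ℂ) ≠ 0 := by exact_mod_cast hR0.ne'
  have h0 : IsConf O p (fun z => (z - p) / (R : ℂ)) := by
    refine ⟨fun z _ => (hd0 z).differentiableAt.differentiableWithinAt, fun z hz => ?_, by simp,
      fun z _ w _ hzw => ?_, fun z _ => ?_⟩
    · rw [mem_ball_zero_iff, norm_div, norm_real, Real.norm_of_nonneg hR0.le, div_lt_one hR0]
      exact hR z hz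
    · simpa [div_left_inj' hRC] using hzw
    · rw [(hd0 z).deriv]; exact one_div_ne_zero hRC
  have hS : 0 < sSup D := by
    refine lt_of_lt_of_le ?_ (le_csSup hbdd ⟨_, h0, rfl⟩)
    exact norm_pos_iff.2 (h0.der p hp)
  set κ := 1 + (1 - √r) ^ 2 / 2 with hκ
  have hr1 : √r < 1 := by
    rw [Real.sqrt_lt' one_pos]; simpa using hr
  have hκ1 : 1 < κ := by
    have : 0 < (1 - √r) ^ 2 := by apply pow_pos; linarith
    linarith
  obtain ⟨_, ⟨φ, h, rfl⟩, hlt⟩ := exists_lt_of_lt_csSup (s := D) ⟨_, _, h0, rfl⟩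
    (div_lt_self hS hκ1)
  refine ⟨φ, h, fun a ha => ?_⟩
  by_contra hcon
  obtain ⟨φ₂, h₂, hle⟩ := koebe_step hO hsc hp h ha hr hcon
  rw [div_lt_iff₀ (by linarith)] at hlt
  have := le_csSup hbdd ⟨φ₂, h₂, rfl⟩
  rw [← hκ] at hle
  linarith

/-- The inverse of an injective analytic map with nonvanishing derivative is analytic. -/
lemma hasDerivAt_invFunOn {O : Set ℂ} (hO : IsOpen O) {φ : ℂ → ℂ} (hd : DifferentiableOn ℂ φ O)
    (hinj : InjOn φ O) {z : ℂ} (hz : z ∈ O) (hne : deriv φ z ≠ 0) :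
    HasDerivAt (Function.invFunOn φ O) (deriv φ z)⁻¹ (φ z) := by
  have hs : HasStrictDerivAt φ (deriv φ z) z := by
    have := (hd.analyticAt (hO.mem_nhds hz)).contDiffAt (n := 1)
    exact this.hasStrictDerivAt one_ne_zero
  have hinv : ∀ x ∈ O, Function.invFunOn φ O (φ x) = x := fun x hx => hinj.leftInvOn_invFunOn hx
  refine (hs.to_local_left_inverse hne (g := Function.invFunOn φ O) ?_).hasDerivAt
  filter_upwards [hO.mem_nhds hz] with x hx using hinv x hx

/-! ### Primitives on simply connected domains -/

/-- Near a given point of `O`, all competitors are bounded away from the unit circle, uniformly. -/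
lemma uniform_bound {O : Set ℂ} (hO : IsOpen O) (hconn : IsConnected O) {p x : ℂ} (hp : p ∈ O)
    (hx : x ∈ O) : ∃ ε > 0, ∃ R < 1, ball x ε ⊆ O ∧
      ∀ φ, IsConf O p φ → ∀ z ∈ ball x ε, ‖φ z‖ < R := by
  obtain ⟨c, hc, h⟩ := harnack hO hconn hp hx
  obtain ⟨δ, hδ, hb⟩ := Metric.isOpen_iff.1 hO x hx
  refine ⟨δ / 5, by positivity, 1 - c / 4, by linarith,
    (ball_subset_ball (by linarith)).trans hb, fun φ hφ z hz => ?_⟩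
  have h1 := h φ hφ.diff hφ.maps
  have h2 := (schwarz_pick (hφ.diff.mono hb) (hφ.maps.mono_left hb) hδ (mem_ball.1 hz).le).1
  rw [hφ.base, norm_zero] at h1
  linarith

/-- If the image of `φ` contains the disc of radius `r`, primitives exist on the preimage of that
disc: transport the problem to the disc by `φ`. -/
lemma primitive_of_conf {O : Set ℂ} (hO : IsOpen O) {p : ℂ} {φ f : ℂ → ℂ} (hφ : IsConf O p φ)
    {r : ℝ} (hr : ∀ a, ‖a‖ ≤ r → a ∈ φ '' O) (hf : DifferentiableOn ℂ f O) :
    ∃ F : ℂ → ℂ, ∀ z ∈ O, ‖φ z‖ < r → HasDerivAt F (f z) z := by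
  set ψ := Function.invFunOn φ O with hψ
  have hinv : ∀ x ∈ O, ψ (φ x) = x := fun x hx => hφ.inj.leftInvOn_invFunOn hx
  have hψd : ∀ ζ ∈ ball (0 : ℂ) r, DifferentiableAt ℂ ψ ζ := fun ζ hζ => by
    obtain ⟨x, hx, rfl⟩ := hr ζ (by simpa using (mem_ball.1 hζ).le)
    exact (hasDerivAt_invFunOn hO hφ.diff hφ.inj hx (hφ.der x hx)).differentiableAt
  have hψm : MapsTo ψ (ball 0 r) O := fun ζ hζ => by
    obtain ⟨x, hx, rfl⟩ := hr ζ (by simpa using (mem_ball.1 hζ).le)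
    rwa [hinv x hx]
  have hψD : DifferentiableOn ℂ ψ (ball 0 r) := fun ζ hζ => (hψd ζ hζ).differentiableWithinAt
  obtain ⟨G, hG⟩ := ((hf.comp hψD hψm).mul (hψD.deriv isOpen_ball)).isExactOn_ball
  refine ⟨G ∘ φ, fun z hz hzr => ?_⟩
  have hd := hasDerivAt_invFunOn hO hφ.diff hφ.inj hz (hφ.der z hz)
  have h1 := (hG (φ z) (by simpa using hzr)).comp z
    (hφ.diff.differentiableAt (hO.mem_nhds hz)).hasDerivAt
  convert! h1 using 1
  simp only [Pi.mul_apply, Function.comp_apply]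
  rw [hinv z hz, hψ, hd.deriv, mul_assoc, inv_mul_cancel₀ (hφ.der z hz), mul_one]

/-- Analytic functions on a bounded simply connected domain have primitives. Primitives exist on
conformal discs exhausting the domain, and after normalisation at `p` they are eventually
constant near each point. -/
lemma exists_primitive {O : Set ℂ} (hO : IsOpen O) (hsc : IsSimplyConnected O)
    (hconn : IsConnected O) {p : ℂ} (hp : p ∈ O) {R : ℝ} (hR : ∀ z ∈ O, ‖z - p‖ < R)
    {f : ℂ → ℂ} (hf : DifferentiableOn ℂ f O) :
    ∃ F : ℂ → ℂ, ∀ z ∈ O, HasDerivAt F (f z) z := by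
  have h1 : ∀ r : ℝ, r < 1 → ∃ φ F : ℂ → ℂ, IsConf O p φ ∧
      ∀ z ∈ O, ‖φ z‖ < r → HasDerivAt F (f z) z := fun r hr => by
    obtain ⟨φ, hφ, h⟩ := exists_conf hO hsc hp hR hr
    obtain ⟨F, hF⟩ := primitive_of_conf hO hφ h hf
    exact ⟨φ, F, hφ, hF⟩
  choose! φ F hφ hF using h1
  have hloc : ∀ x ∈ O, ∃ ε > 0, ∃ R < 1, ball x ε ⊆ O ∧ ∀ r, R < r → r < 1 → ∀ r', R < r' →
      r' < 1 → ∀ y ∈ ball x ε, F r y - F r x = F r' y - F r' x ∧ HasDerivAt (F r) (f y) y := by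
    intro x hx
    obtain ⟨ε, hε, R, hR, hb, h⟩ := uniform_bound hO hconn hp hx
    have hder : ∀ r, R < r → r < 1 → ∀ y ∈ ball x ε, HasDerivAt (F r) (f y) y :=
      fun r h1 h2 y hy => hF r h2 y (hb hy) ((h _ (hφ r h2) y hy).trans h1)
    refine ⟨ε, hε, R, hR, hb, fun r hr hr1 r' hr' hr1' y hy => ⟨?_, hder r hr hr1 y hy⟩⟩
    have hc : ∀ y ∈ ball x ε, HasDerivAt (fun y => F r y - F r' y) 0 y := fun y hy => by
      simpa using (hder r hr hr1 y hy).fun_sub (hder r' hr' hr1' y hy)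
    have := (convex_ball x ε).is_const_of_fderivWithin_eq_zero (𝕜 := ℂ)
      (f := fun y => F r y - F r' y)
      (fun y hy => (hc y hy).differentiableAt.differentiableWithinAt)
      (fun y hy => by
        rw [fderivWithin_of_isOpen isOpen_ball hy]
        ext; simp [(hc y hy).deriv])
      hy (mem_ball_self hε)
    linear_combination this
  -- chaining along the connected set `O` compares values at `x` and at `p`
  have hglob : ∀ x ∈ O, ∃ R < 1, ∀ r, R < r → r < 1 → ∀ r', R < r' → r' < 1 →
      F r x - F r p = F r' x - F r' p := by
    intro x hx
    refine hconn.isPreconnected.induction₂ (fun y x => ∃ R < 1, ∀ r, R < r → r < 1 → ∀ r', R < r' →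
      r' < 1 → F r x - F r y = F r' x - F r' y) ?_ ?_ ?_ hp hx
    · intro x hx
      obtain ⟨ε, hε, R, hR, hb, h⟩ := hloc x hx
      filter_upwards [mem_nhdsWithin_of_mem_nhds (ball_mem_nhds x hε)] with y hy
      exact ⟨R, hR, fun r h1 h2 r' h3 h4 => (h r h1 h2 r' h3 h4 y hy).1⟩
    · rintro x y z - - - ⟨R, hR, h⟩ ⟨R', hR', h'⟩
      refine ⟨max R R', max_lt hR hR', fun r h1 h2 r' h3 h4 => ?_⟩
      rw [max_lt_iff] at h1 h3
      linear_combination h r h1.1 h2 r' h3.1 h4 + h' r h1.2 h2 r' h3.2 h4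
    · rintro x y - - ⟨R, hR, h⟩
      exact ⟨R, hR, fun r h1 h2 r' h3 h4 => by linear_combination - h r h1 h2 r' h3 h4⟩
  -- `F r x - F r p` is independent of `r` once `r > ρ x`; the stable value is the primitive
  choose! ρ hρ1 hρ using hglob
  refine ⟨fun x => F ((1 + ρ x) / 2) x - F ((1 + ρ x) / 2) p, fun x hx => ?_⟩
  obtain ⟨ε, hε, R, hR, hb, h⟩ := hloc x hx
  set r := (1 + max R (ρ x)) / 2 with hrdef
  have hm : max R (ρ x) < 1 := max_lt hR (hρ1 x hx)
  have hr1 : r < 1 := by rw [hrdef]; linarith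
  have hrR : R < r := by rw [hrdef]; linarith [le_max_left R (ρ x)]
  have hrx : ρ x < r := by rw [hrdef]; linarith [le_max_right R (ρ x)]
  refine ((h r hrR hr1 r hrR hr1 x (mem_ball_self hε)).2.sub_const (F r p)).congr_of_eventuallyEq ?_
  filter_upwards [ball_mem_nhds x hε] with y hy
  have hy1 := hρ1 y (hb hy)
  set r' := (1 + max r (ρ y)) / 2 with hrdef'
  have hm' : max r (ρ y) < 1 := max_lt hr1 hy1
  have hr1' : r' < 1 := by rw [hrdef']; linarith
  have hrr' : r < r' := by rw [hrdef']; linarith [le_max_left r (ρ y)]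
  have hry' : ρ y < r' := by rw [hrdef']; linarith [le_max_right r (ρ y)]
  have e1 := hρ y (hb hy) _ (by linarith : ρ y < (1 + ρ y) / 2) (by linarith) r' hry' hr1'
  have e2 := (h r hrR hr1 r' (hrR.trans hrr') hr1' y hy).1
  have e3 := hρ x hx r hrx hr1 r' (hrx.trans hrr') hr1'
  linear_combination e1 - e2 - e3

/-! ### Boundary distance estimates -/

/-- On the largest disc around `w` in `O`, a branch of `√(z - a)` stays in the half-plane around
its value at `w`. -/
lemma sqrt_branch {w a : ℂ} {δ : ℝ} (hδ : ‖w - a‖ = δ) {g : ℂ → ℂ}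
    (hg : ContinuousOn g (ball w δ)) (hg2 : ∀ z, g z ^ 2 = z - a) (hδ0 : 0 < δ) {z : ℂ}
    (hz : z ∈ ball w δ) : 0 < (g z / g w).re := by
  have hgw : g w ≠ 0 := fun h => by
    have := hg2 w
    rw [h] at this
    rw [← this] at hδ
    simp at hδ; linarith
  have hne : ∀ x ∈ ball w δ, (g x / g w).re ≠ 0 := by
    intro x hx h0
    have e : (g x / g w) ^ 2 = (x - a) / (w - a) := by rw [div_pow, hg2, hg2]
    have hwa : w - a ≠ 0 := by rw [← hg2]; exact pow_ne_zero _ hgw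
    have h1 : ‖(x - a) / (w - a) - 1‖ < 1 := by
      have : (x - a) / (w - a) - 1 = (x - w) / (w - a) := by field_simp; ring
      rw [this, norm_div, hδ, div_lt_one hδ0, ← dist_eq_norm]
      exact hx
    have h2 : 0 < ((x - a) / (w - a)).re := by
      have := (abs_lt.1 ((abs_re_le_norm _).trans_lt h1)).1
      simp only [sub_re, one_re] at this
      simpa using (by linarith : 0 < ((x - a) / (w - a)).re)
    rw [← e, sq, mul_re, h0] at h2
    nlinarith [sq_nonneg (g x / g w).im]
  by_contra hcon
  push Not at hcon
  have hc : ContinuousOn (fun x => (g x / g w).re) (ball w δ) :=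
    Complex.continuous_re.comp_continuousOn (hg.div_const _)
  obtain ⟨x, hx, h0⟩ := (convex_ball w δ).isPreconnected.intermediate_value hz
    (mem_ball_self hδ0) hc ⟨hcon, by simp [div_self hgw]⟩
  exact hne x hx h0

/-- A weak form of the Koebe quarter theorem: analytic maps from a disc into a simply connected
domain have derivative controlled by the distance to the boundary. -/
lemma weak_koebe {O : Set ℂ} (hO : IsOpen O) (hsc : IsSimplyConnected O) (hne : Oᶜ.Nonempty)
    {ψ : ℂ → ℂ} {ζ : ℂ} {ρ : ℝ} (hρ : 0 < ρ) (hψ : DifferentiableOn ℂ ψ (ball ζ ρ))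
    (hm : MapsTo ψ (ball ζ ρ) O) : ‖deriv ψ ζ‖ ≤ 64 / ρ * infDist (ψ ζ) Oᶜ := by
  obtain ⟨a, haO, hdist⟩ := hO.isClosed_compl.exists_infDist_eq_dist hne (ψ ζ)
  set w := ψ ζ with hw
  have hwO : w ∈ O := hm (mem_ball_self hρ)
  have hwa : w - a ≠ 0 := fun h => haO (by rwa [← sub_eq_zero.1 h])
  set δ := infDist w Oᶜ with hδ
  have hδ' : ‖w - a‖ = δ := by rw [← dist_eq_norm, hdist]
  have hδ0 : 0 < δ := by rw [← hδ']; exact norm_pos_iff.2 hwa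
  have hbO : ball w δ ⊆ O := by
    have := ball_infDist_subset_compl (s := Oᶜ) (x := w)
    rwa [compl_compl] at this
  obtain ⟨g, hg2, hg⟩ := exists_sqrt hO hsc (φ := fun z => z - a)
    (by fun_prop) (fun z hz h => haO (by rwa [← sub_eq_zero.1 h]))
  have hgc : ContinuousOn g O := fun z hz => (hg z hz).continuousAt.continuousWithinAt
  have hgw2 : ‖g w‖ ^ 2 = δ := by rw [← norm_pow, hg2, hδ']
  have hgw : g w ≠ 0 := fun h => by rw [h] at hgw2; simp at hgw2; linarith
  have hgw' : 0 < ‖g w‖ := norm_pos_iff.2 hgw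
  -- the image of `g` omits a disc around `-g w`
  have homit : ∀ z ∈ O, ‖g w‖ / 4 ≤ ‖g z + g w‖ := by
    intro z hz
    by_contra hcon
    push Not at hcon
    set s := -g z with hs
    have hs2 : s ^ 2 = z - a := by rw [hs, neg_sq, hg2]
    have hsw : ‖s - g w‖ < ‖g w‖ / 4 := by
      rw [hs, ← norm_neg]; convert! hcon using 2; ring
    have hzb : z ∈ ball w δ := by
      rw [mem_ball, dist_eq_norm]
      have e : z - w = (s - g w) * ((s - g w) + 2 * g w) := by
        linear_combination -hs2 + hg2 w
      rw [e, norm_mul]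
      have h1 : ‖(s - g w) + 2 * g w‖ ≤ ‖s - g w‖ + 2 * ‖g w‖ := by
        refine (norm_add_le _ _).trans ?_
        simp
      nlinarith [norm_nonneg (s - g w)]
    -- close to `-g w` the square of `g` identifies `z` as a point near `w`, where `g` is near `g w`
    have h1 := sqrt_branch hδ' (hgc.mono hbO) hg2 hδ0 hzb
    have h2 : ‖g z / g w + 1‖ < 1 / 4 := by
      have : g z / g w + 1 = (g z + g w) / g w := by field_simp
      rw [this, norm_div, div_lt_iff₀ hgw']
      linarith
    have h3 := (abs_lt.1 ((abs_re_le_norm _).trans_lt h2)).2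
    simp only [add_re, one_re] at h3
    linarith
  have hgz : ∀ z ∈ O, g z + g w ≠ 0 := fun z hz => norm_pos_iff.1 (by linarith [homit z hz])
  set c : ℂ := ((‖g w‖ / 4 : ℝ) : ℂ) with hc
  have hh : ∀ z ∈ O, HasDerivAt (fun z => c / (g z + g w)) (c * (-(1 / (2 * g z)) /
      (g z + g w) ^ 2)) z := fun z hz => by
    have e : deriv (fun z : ℂ => z - a) z = 1 := by simp
    have h1 := hg z hz
    rw [e] at h1
    simpa [div_eq_mul_inv] using ((h1.add_const (g w)).fun_inv (hgz z hz)).const_mul c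
  have hψd : DifferentiableAt ℂ ψ ζ := hψ.differentiableAt (ball_mem_nhds ζ hρ)
  -- the Schwarz lemma for `c / (g + g w)` composed with `ψ`, a map into the closed unit disc
  have hcomp := (hh w hwO).comp ζ hψd.hasDerivAt
  have hle1 : ∀ z ∈ O, ‖c / (g z + g w)‖ ≤ 1 := fun z hz => by
    rw [norm_div, hc, norm_real, Real.norm_of_nonneg (by positivity)]
    exact div_le_one_of_le₀ (homit z hz) (norm_nonneg _)
  have hS := norm_deriv_le_div_of_mapsTo_ball (R₂ := 2) (c := ζ) (R₁ := ρ)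
    (f := (fun z => c / (g z + g w)) ∘ ψ)
    (fun x hx => (((hh _ (hm hx)).differentiableAt).comp x
      (hψ.differentiableAt (isOpen_ball.mem_nhds hx))).differentiableWithinAt)
    (fun x hx => by
      rw [mem_closedBall, dist_eq_norm]
      refine (norm_sub_le _ _).trans ?_
      have h1 := hle1 _ (hm hx)
      have h2 := hle1 _ hwO
      simp only [Function.comp_apply]
      linarith) hρ
  rw [hcomp.deriv] at hS
  have e : ‖c * (-(1 / (2 * g w)) / (g w + g w) ^ 2) * deriv ψ ζ‖ = ‖deriv ψ ζ‖ / (32 * δ) := by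
    rw [← two_mul (g w), ← hgw2, hc]
    simp only [norm_mul, norm_div, norm_neg, norm_pow, norm_real, norm_one, Complex.norm_ofNat,
      Real.norm_of_nonneg (by positivity : (0:ℝ) ≤ ‖g w‖ / 4)]
    field_simp
    ring
  rw [e, div_le_iff₀ (by positivity)] at hS
  refine hS.trans (le_of_eq ?_)
  field_simp; norm_num

/-- The Schwarz lemma for maps of a disc into the right half-plane, at a point where the map takes
a real value. -/
lemma schwarz_halfPlane {H : ℂ → ℂ} {w : ℂ} {δ h : ℝ} (hδ : 0 < δ)
    (hd : DifferentiableOn ℂ H (ball w δ)) (hre : ∀ z ∈ ball w δ, 0 < (H z).re)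
    (hw : H w = h) : ‖deriv H w‖ ≤ 2 / δ * h := by
  have hh : 0 < h := by simpa [hw] using hre w (mem_ball_self hδ)
  have hne : ∀ z ∈ ball w δ, H z + h ≠ 0 := fun z hz h0 => by
    have := congrArg re h0
    simp at this
    linarith [hre z hz]
  have hT : ∀ z ∈ ball w δ, HasDerivAt (fun z => (H z - h) / (H z + h))
      ((deriv H z * (H z + h) - (H z - h) * deriv H z) / (H z + h) ^ 2) z := fun z hz => by
    have h1 := (hd.differentiableAt (isOpen_ball.mem_nhds hz)).hasDerivAt
    exact (h1.sub_const _).fun_div (h1.add_const _) (hne z hz)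
  have hS := norm_deriv_le_div_of_mapsTo_ball (R₂ := 1) (c := w) (R₁ := δ)
    (f := fun z => (H z - h) / (H z + h))
    (fun x hx => (hT x hx).differentiableAt.differentiableWithinAt)
    (fun x hx => by
      simp only [hw, sub_self, zero_div, mem_closedBall, dist_zero_right]
      rw [norm_div, div_le_one (norm_pos_iff.2 (hne x hx)),
        ← sq_le_sq₀ (norm_nonneg _) (norm_nonneg _), Complex.sq_norm, Complex.sq_norm,
        normSq_apply, normSq_apply]
      simp only [sub_re, sub_im, add_re, add_im, ofReal_re, ofReal_im]
      nlinarith [hre x hx]) hδ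
  rw [(hT w (mem_ball_self hδ)).deriv, hw] at hS
  have e : (deriv H w * (h + h) - (h - h) * deriv H w) / ((h : ℂ) + h) ^ 2
      = deriv H w / ((2 * h : ℝ) : ℂ) := by
    have : (h : ℂ) ≠ 0 := by exact_mod_cast hh.ne'
    push_cast
    field_simp
    ring
  rw [e, norm_div, norm_real, Real.norm_of_nonneg (by positivity),
    div_le_div_iff₀ (by positivity) hδ] at hS
  rw [div_mul_eq_mul_div, le_div_iff₀ hδ]
  linarith

/-! ### Gaussian smoothing of Lipschitz functions -/

open MeasureTheory Real in
lemma integral_abs_mul_gaussian {b : ℝ} (hb : 0 < b) :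
    ∫ u : ℝ, |u| * Real.exp (-b * u ^ 2) = b⁻¹ := by
  have h1 := integral_comp_abs (f := fun u : ℝ => u * Real.exp (-b * u ^ 2))
  simp only [sq_abs] at h1
  rw [h1]
  have h2 := integral_mul_cexp_neg_mul_sq (b := (b : ℂ)) (by simpa using hb)
  have h3 : ∀ r : ℝ, (r : ℂ) * cexp (-(b : ℂ) * (r : ℂ) ^ 2)
      = ((r * Real.exp (-b * r ^ 2) : ℝ) : ℂ) := fun r => by push_cast; rfl
  simp only [h3] at h2
  rw [integral_complex_ofReal] at h2
  have h4 : ∫ r in Ioi (0:ℝ), r * Real.exp (-b * r ^ 2) = (2 * b)⁻¹ := by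
    have : ((2 * (b : ℂ))⁻¹) = (((2 * b)⁻¹ : ℝ) : ℂ) := by push_cast; rfl
    rw [this] at h2
    exact Complex.ofReal_injective h2
  rw [h4]
  field_simp

lemma norm_cexp_gaussian (b u y : ℝ) :
    ‖cexp (-(b : ℂ) * ((u : ℂ) + y * I) ^ 2)‖ = Real.exp (b * y ^ 2) * Real.exp (-b * u ^ 2) := by
  rw [Complex.norm_exp, ← Real.exp_add]
  congr 1
  simp [sq]
  ring

open MeasureTheory in
/-- Gaussian convolutions of bounded continuous functions extend to entire functions. -/
lemma differentiable_gaussian {b M : ℝ} (hb : 0 < b) {V : ℝ → ℝ} (hV : Continuous V)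
    (hM : ∀ s, |V s| ≤ M) :
    Differentiable ℂ (fun w : ℂ => ∫ s : ℝ, (V s : ℂ) * cexp (-(b : ℂ) * (w - s) ^ 2)) := by
  intro w₀
  have hM0 : 0 ≤ M := (abs_nonneg _).trans (hM 0)
  set Y := |w₀.im| + 1 with hY
  have hVc : Continuous fun s : ℝ => (V s : ℂ) := by fun_prop
  have key : ∀ (w : ℂ) (s : ℝ), ‖cexp (-(b : ℂ) * (w - s) ^ 2)‖
      = Real.exp (b * w.im ^ 2) * Real.exp (-b * (w.re - s) ^ 2) := fun w s => by
    rw [← norm_cexp_gaussian]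
    congr 4
    apply Complex.ext <;> simp
  refine (hasDerivAt_integral_of_dominated_loc_of_deriv_le (μ := volume) (s := ball w₀ 1)
    (F := fun (w : ℂ) (s : ℝ) => (V s : ℂ) * cexp (-(b : ℂ) * (w - s) ^ 2))
    (F' := fun (w : ℂ) (s : ℝ) => (V s : ℂ) * (cexp (-(b : ℂ) * (w - s) ^ 2) *
      (-(b : ℂ) * (2 * (w - s)))))
    (bound := fun s => M * (Real.exp (b * (1 + Y ^ 2)) * (2 * b)) *
      ((|w₀.re - s| + (Y + 1)) * Real.exp (-(b / 2) * (w₀.re - s) ^ 2)))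
    (ball_mem_nhds _ one_pos) ?_ ?_ ?_ ?_ ?_ ?_).2.differentiableAt
  · exact Eventually.of_forall fun w => (by fun_prop : Continuous _).aestronglyMeasurable
  · have h1 : Integrable fun s : ℝ => M * (Real.exp (b * w₀.im ^ 2) *
        Real.exp (-b * (w₀.re - s) ^ 2)) :=
      (((integrable_exp_neg_mul_sq hb).comp_sub_left w₀.re).const_mul _).const_mul _
    refine h1.mono' (by fun_prop : Continuous _).aestronglyMeasurable
      (Eventually.of_forall fun s => ?_)
    rw [norm_mul, key, norm_real]
    gcongr
    exact hM s
  · exact (by fun_prop : Continuous _).aestronglyMeasurable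
  · refine Eventually.of_forall fun s w hw => ?_
    rw [mem_ball, dist_eq_norm] at hw
    have hre := (abs_re_le_norm (w - w₀)).trans hw.le
    have him := (abs_im_le_norm (w - w₀)).trans hw.le
    rw [sub_re] at hre
    rw [sub_im] at him
    have him' : |w.im| ≤ Y := by
      have := abs_add_le (w.im - w₀.im) w₀.im
      rw [sub_add_cancel] at this
      linarith
    have hre' : |w.re - s| ≤ |w₀.re - s| + 1 := by
      have := abs_add_le (w.re - w₀.re) (w₀.re - s)
      rw [sub_add_sub_cancel] at this
      linarith
    have hn : ‖w - s‖ ≤ |w₀.re - s| + (Y + 1) := by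
      refine (norm_le_abs_re_add_abs_im _).trans ?_
      simp only [sub_re, ofReal_re, sub_im, ofReal_im, sub_zero]
      linarith
    have hY2 : w.im ^ 2 ≤ Y ^ 2 := sq_le_sq' (by linarith [abs_le.1 him']) (by linarith [abs_le.1 him'])
    have hq : (w₀.re - s) ^ 2 / 2 - 1 ≤ (w.re - s) ^ 2 := by
      have h1 : (w.re - w₀.re) ^ 2 ≤ 1 := by
        rw [← sq_abs]; nlinarith [abs_nonneg (w.re - w₀.re)]
      nlinarith [sq_nonneg ((w.re - s) + (w.re - w₀.re)),
        sq_nonneg ((w₀.re - s) + 2 * (w.re - w₀.re))]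
    have hexp : ‖cexp (-(b : ℂ) * (w - s) ^ 2)‖
        ≤ Real.exp (b * (1 + Y ^ 2)) * Real.exp (-(b / 2) * (w₀.re - s) ^ 2) := by
      rw [key, ← Real.exp_add, ← Real.exp_add]
      apply Real.exp_le_exp.2
      nlinarith [mul_le_mul_of_nonneg_left hq hb.le, mul_le_mul_of_nonneg_left hY2 hb.le]
    rw [norm_mul, norm_mul, norm_mul, norm_mul, norm_neg, norm_real, norm_real, Complex.norm_ofNat,
      Real.norm_of_nonneg hb.le]
    calc ‖V s‖ * (‖cexp (-(b : ℂ) * (w - s) ^ 2)‖ * (b * (2 * ‖w - s‖)))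
        ≤ M * (Real.exp (b * (1 + Y ^ 2)) * Real.exp (-(b / 2) * (w₀.re - s) ^ 2)
            * (b * (2 * (|w₀.re - s| + (Y + 1))))) := by
          gcongr
          exact hM s
      _ = _ := by ring
  · have h2 : Integrable fun u : ℝ => (|u| + (Y + 1)) * Real.exp (-(b / 2) * u ^ 2) := by
      have h3 := (integrable_mul_exp_neg_mul_sq (b := b / 2) (by linarith)).norm
      have h4 := (integrable_exp_neg_mul_sq (b := b / 2) (by linarith)).const_mul (Y + 1)
      refine (h3.add h4).congr (Eventually.of_forall fun u => ?_)
      simp only [Pi.add_apply, norm_mul, Real.norm_eq_abs, Real.abs_exp]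
      ring
    exact (h2.comp_sub_left w₀.re).const_mul _
  · refine Eventually.of_forall fun s w _ => ?_
    have h := (((hasDerivAt_id w).sub_const (s : ℂ)).pow 2).const_mul (-(b : ℂ))
    refine ((h.cexp).const_mul (V s : ℂ)).congr_deriv ?_
    simp

open MeasureTheory in
/-- A bounded Lipschitz function on the line is within `1` of the restriction of an entire function
whose imaginary part, on a fixed strip, is controlled by the Lipschitz constant alone. -/
lemma exists_entire_approx {K : ℝ} (hK : 0 ≤ K) : ∃ A : ℝ, ∀ (V : ℝ → ℝ) (M : ℝ), (∀ s, |V s| ≤ M) →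
    (∀ s t, |V s - V t| ≤ K * |s - t|) → ∃ g : ℂ → ℂ, Differentiable ℂ g ∧
      (∀ x : ℝ, ‖g x - V x‖ ≤ 1) ∧ ∀ z : ℂ, |z.im| ≤ 2 → |(g z).im| ≤ A := by
  -- convolving with the Gaussian of parameter `b` moves `V` by at most `K / √(π b)`
  set b : ℝ := K ^ 2 + 1 with hbdef
  have hb : 0 < b := by positivity
  refine ⟨Real.exp (b * 4), fun V M hM hL => ?_⟩
  have hVc : Continuous V := (LipschitzWith.of_dist_le_mul (K := ⟨K, hK⟩) fun s t => by
    rw [Real.dist_eq, Real.dist_eq]; exact hL s t).continuous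
  set c : ℝ := √(Real.pi / b) with hc
  have hc0 : 0 < c := Real.sqrt_pos.2 (div_pos Real.pi_pos hb)
  have hcK : c⁻¹ * (K * b⁻¹) ≤ 1 := by
    rw [inv_mul_le_iff₀ hc0, mul_one, hc]
    apply Real.le_sqrt_of_sq_le
    rw [mul_pow, inv_pow, ← div_eq_mul_inv, div_le_div_iff₀ (by positivity) hb]
    have : K ^ 2 ≤ b := by linarith
    nlinarith [Real.pi_gt_three, mul_le_mul_of_nonneg_right this hb.le, sq_nonneg b]
  have hnorm : ∀ x y : ℝ, ∫ s : ℝ, cexp (-(b : ℂ) * ((x + y * I : ℂ) - s) ^ 2) = c := by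
    intro x y
    have h1 := integral_sub_left_eq_self (μ := volume)
      (fun u : ℝ => cexp (-(b : ℂ) * ((u : ℂ) + y * I) ^ 2)) x
    rw [GaussianFourier.integral_cexp_neg_mul_sq_add_real_mul_I (by simpa using hb)] at h1
    have h2 : ((Real.pi : ℂ) / b) ^ (1 / 2 : ℂ) = c := by
      rw [hc, Real.sqrt_eq_rpow, ofReal_cpow (by positivity)]
      push_cast
      rfl
    rw [← h2, ← h1]
    congr 1 with s
    congr 3
    push_cast
    ring
  have hkint : ∀ x y : ℝ, Integrable fun s : ℝ => cexp (-(b : ℂ) * ((x + y * I : ℂ) - s) ^ 2) := by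
    intro x y
    refine ((GaussianFourier.integrable_cexp_neg_mul_sq_add_real_mul_I (b := b)
      (by simpa using hb) y).comp_sub_left x).congr (Eventually.of_forall fun s => ?_)
    simp only
    congr 3
    push_cast
    ring
  set g : ℂ → ℂ := fun w => (c : ℂ)⁻¹ * ∫ s : ℝ, (V s : ℂ) * cexp (-(b : ℂ) * (w - s) ^ 2) with hg
  have main : ∀ x y : ℝ, ‖g (x + y * I) - V x‖ ≤ Real.exp (b * y ^ 2) := by
    intro x y
    have hi1 : Integrable fun s : ℝ =>
        (V s : ℂ) * cexp (-(b : ℂ) * ((x + y * I : ℂ) - s) ^ 2) := by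
      refine (hkint x y).bdd_mul (c := M) (by fun_prop : Continuous _).aestronglyMeasurable
        (Eventually.of_forall fun s => ?_)
      rw [norm_real]; exact hM s
    have e : g (x + y * I) - V x = (c : ℂ)⁻¹ *
        ∫ s : ℝ, ((V s - V x : ℝ) : ℂ) * cexp (-(b : ℂ) * ((x + y * I : ℂ) - s) ^ 2) := by
      have : ∀ s : ℝ, ((V s - V x : ℝ) : ℂ) * cexp (-(b : ℂ) * ((x + y * I : ℂ) - s) ^ 2)
          = (V s : ℂ) * cexp (-(b : ℂ) * ((x + y * I : ℂ) - s) ^ 2)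
            - V x * cexp (-(b : ℂ) * ((x + y * I : ℂ) - s) ^ 2) := fun s => by push_cast; ring
      simp only [this]
      rw [integral_sub hi1 ((hkint x y).const_mul _), integral_const_mul, hnorm]
      have : (c : ℂ) ≠ 0 := by exact_mod_cast hc0.ne'
      simp only [hg]
      field_simp
    have hB : Integrable fun u : ℝ => |u| * Real.exp (-b * u ^ 2) := by
      refine (integrable_mul_exp_neg_mul_sq hb).norm.congr (Eventually.of_forall fun u => ?_)
      simp
    have hle : ‖∫ s : ℝ, ((V s - V x : ℝ) : ℂ) * cexp (-(b : ℂ) * ((x + y * I : ℂ) - s) ^ 2)‖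
        ≤ ∫ s : ℝ, (K * Real.exp (b * y ^ 2)) * (|x - s| * Real.exp (-b * (x - s) ^ 2)) := by
      refine norm_integral_le_of_norm_le ((hB.comp_sub_left x).const_mul _)
        (Eventually.of_forall fun s => ?_)
      have : (x + y * I : ℂ) - s = ((x - s : ℝ) : ℂ) + y * I := by push_cast; ring
      rw [norm_mul, this, norm_cexp_gaussian, norm_real, Real.norm_eq_abs]
      have := hL s x
      rw [abs_sub_comm s x] at this
      calc _ ≤ (K * |x - s|) * (Real.exp (b * y ^ 2) * Real.exp (-b * (x - s) ^ 2)) := by gcongr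
        _ = _ := by ring
    rw [integral_const_mul, integral_sub_left_eq_self (μ := volume)
      (fun u : ℝ => |u| * Real.exp (-b * u ^ 2)) x, integral_abs_mul_gaussian hb] at hle
    rw [e, norm_mul, norm_inv, norm_real, Real.norm_of_nonneg hc0.le]
    calc _ ≤ c⁻¹ * (K * Real.exp (b * y ^ 2) * b⁻¹) := by gcongr
      _ = (c⁻¹ * (K * b⁻¹)) * Real.exp (b * y ^ 2) := by ring
      _ ≤ 1 * Real.exp (b * y ^ 2) := by gcongr
      _ = _ := one_mul _
  refine ⟨g, (differentiable_gaussian hb hVc hM).const_mul _, fun x => ?_, fun z hz => ?_⟩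
  · simpa using main x 0
  · have h1 := main z.re z.im
    rw [re_add_im] at h1
    have h2 := (abs_im_le_norm _).trans h1
    rw [sub_im, ofReal_im, sub_zero] at h2
    refine h2.trans (Real.exp_le_exp.2 ?_)
    rw [← sq_abs]
    have : |z.im| ^ 2 ≤ 4 := by nlinarith [abs_nonneg z.im]
    gcongr

/-! ### Strip coordinates -/

lemma re_exp_pos {ζ : ℂ} (h : |ζ.im| < Real.pi / 2) : 0 < (exp ζ).re := by
  rw [exp_re]
  exact mul_pos (Real.exp_pos _) (Real.cos_pos_of_mem_Ioo (by simpa using abs_lt.1 h))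

lemma one_lt_pi_div_two : (1 : ℝ) < Real.pi / 2 := by linarith [Real.pi_gt_three]

/-- The rectangle around the segment `[0, S]` of the real axis. -/
def rect (S : ℝ) : Set ℂ := {ζ | -1 < ζ.re ∧ ζ.re < S + 1 ∧ |ζ.im| < 1}

lemma isOpen_rect (S : ℝ) : IsOpen (rect S) := by
  have h1 : IsOpen {ζ : ℂ | -1 < ζ.re} := isOpen_lt continuous_const continuous_re
  have h2 : IsOpen {ζ : ℂ | ζ.re < S + 1} := isOpen_lt continuous_re continuous_const
  have h3 : IsOpen {ζ : ℂ | |ζ.im| < 1} := isOpen_lt continuous_im.abs continuous_const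
  exact h1.inter (h2.inter h3)

lemma convex_rect (S : ℝ) : Convex ℝ (rect S) := by
  have h1 := convex_halfSpace_re_gt (-1)
  have h2 := convex_halfSpace_re_lt (S + 1)
  have h3 := convex_halfSpace_im_gt (-1)
  have h4 := convex_halfSpace_im_lt 1
  convert! h1.inter (h2.inter (h3.inter h4)) using 1
  ext ζ
  simp [rect, abs_lt]

lemma ball_subset_rect {S s : ℝ} (hs : s ∈ Icc 0 S) : ball (s : ℂ) 1 ⊆ rect S := by
  intro ζ hζ
  rw [mem_ball, dist_eq_norm] at hζ
  have h1 := abs_lt.1 ((abs_re_le_norm _).trans_lt hζ)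
  have h2 := (abs_im_le_norm _).trans_lt hζ
  simp only [sub_re, ofReal_re, sub_im, ofReal_im, sub_zero] at h1 h2
  exact ⟨by linarith [hs.1], by linarith [hs.2], h2⟩

lemma ofReal_mem_rect {S s : ℝ} (hs : s ∈ Icc 0 S) : (s : ℂ) ∈ rect S :=
  ball_subset_rect hs (mem_ball_self one_pos)

/-- The map `ζ ↦ (e^ζ - 1) / (e^ζ + 1)` sends a bounded rectangle into a disc of radius less
than `1`. -/
lemma exists_tanh_bound {S₀ : ℝ} (hS : 0 ≤ S₀) :
    ∃ r < 1, ∀ ζ ∈ rect S₀, ‖(exp ζ - 1) / (exp ζ + 1)‖ ≤ r := by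
  set Kc : Set ℂ := Icc (-1) (S₀ + 1) ×ℂ Icc (-1) 1 with hK
  have hKc : IsCompact Kc := isCompact_Icc.reProdIm isCompact_Icc
  have him : ∀ ζ ∈ Kc, 0 < (exp ζ).re := fun ζ hζ => by
    rw [hK, mem_reProdIm] at hζ
    exact re_exp_pos ((abs_le.2 hζ.2).trans_lt one_lt_pi_div_two)
  have hne : ∀ ζ ∈ Kc, exp ζ + 1 ≠ 0 := fun ζ hζ h => by
    have := congrArg re h
    simp only [add_re, one_re, zero_re] at this
    linarith [him ζ hζ]
  have hc : ContinuousOn (fun ζ => ‖(exp ζ - 1) / (exp ζ + 1)‖) Kc :=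
    ((by fun_prop : Continuous fun ζ => exp ζ - 1).continuousOn.div
      (by fun_prop : Continuous fun ζ => exp ζ + 1).continuousOn hne).norm
  obtain ⟨ζ₀, h₀, hmax⟩ := hKc.exists_isMaxOn ⟨0, by simp [hK, mem_reProdIm]; linarith⟩ hc
  refine ⟨‖(exp ζ₀ - 1) / (exp ζ₀ + 1)‖, ?_, fun ζ hζ => hmax (a := ζ) ?_⟩
  · rw [norm_div, div_lt_one (norm_pos_iff.2 (hne _ h₀)),
      ← sq_lt_sq₀ (norm_nonneg _) (norm_nonneg _), Complex.sq_norm, Complex.sq_norm,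
      normSq_apply, normSq_apply]
    simp only [sub_re, sub_im, add_re, add_im, one_re, one_im]
    nlinarith [him _ h₀]
  · rw [hK, mem_reProdIm]
    exact ⟨⟨hζ.1.le, hζ.2.1.le⟩, abs_le.1 hζ.2.2.le⟩

/-- A conformal coordinate `W` on `O`, with values in a strip, whose image contains a rectangle
around a real segment `[0, S]`; its inverse `Ψ` on the rectangle carries the ends of the segment to
two given points of `O`. -/
structure StripCoord (O : Set ℂ) (z₀ z₁ : ℂ) (S : ℝ) (W Ψ : ℂ → ℂ) : Prop where
  nonneg : 0 ≤ S
  diff : DifferentiableOn ℂ W O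
  im_lt : ∀ z ∈ O, |(W z).im| < Real.pi / 2
  der : ∀ z ∈ O, deriv W z ≠ 0
  mem : ∀ ζ ∈ rect S, Ψ ζ ∈ O
  right_inv : ∀ ζ ∈ rect S, W (Ψ ζ) = ζ
  hasDeriv : ∀ ζ ∈ rect S, HasDerivAt Ψ (deriv W (Ψ ζ))⁻¹ ζ
  left : Ψ 0 = z₀
  right : Ψ S = z₁

/-- On a bounded simply connected domain any two points are the ends of such a segment. The
Harnack inequality bounds `S` by a constant `S₀` known before the conformal map is chosen, so that
the map can be taken nearly extremal to the degree required by a rectangle of length `S₀`. -/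
lemma exists_stripCoord {O : Set ℂ} (hO : IsOpen O) (hsc : IsSimplyConnected O)
    (hconn : IsConnected O) {z₀ z₁ : ℂ} (h₀ : z₀ ∈ O) (h₁ : z₁ ∈ O)
    {R : ℝ} (hR : ∀ z ∈ O, ‖z - z₀‖ < R) :
    ∃ (S : ℝ) (W Ψ : ℂ → ℂ), StripCoord O z₀ z₁ S W Ψ := by
  obtain ⟨c, hc, hharn⟩ := harnack hO hconn h₀ h₁
  set S₀ := max 0 (Real.log (2 / c)) with hS₀
  obtain ⟨r, hr, hrT⟩ := exists_tanh_bound (le_max_left 0 (Real.log (2 / c)))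
  obtain ⟨φ, hφ, hsurj⟩ := exists_conf hO hsc h₀ hR hr
  have hc1 : c ≤ 1 - ‖φ z₁‖ := by simpa [hφ.base] using hharn φ hφ.diff hφ.maps
  -- a rotation makes the value at `z₁` nonnegative
  obtain ⟨u, hu, hu1⟩ : ∃ u : ℂ, ‖u‖ = 1 ∧ u * φ z₁ = (‖φ z₁‖ : ℝ) := by
    by_cases h : φ z₁ = 0
    · exact ⟨1, by simp, by simp [h]⟩
    · have hn : (‖φ z₁‖ : ℂ) ≠ 0 := by exact_mod_cast norm_ne_zero_iff.2 h
      refine ⟨‖φ z₁‖ / φ z₁, ?_, by field_simp⟩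
      rw [norm_div, norm_real, norm_norm, div_self (norm_ne_zero_iff.2 h)]
  have hu0 : u ≠ 0 := norm_pos_iff.1 (by rw [hu]; exact one_pos)
  set x₁ := ‖φ z₁‖ with hx₁
  have hx₁0 : 0 ≤ x₁ := norm_nonneg _
  have hx₁1 : x₁ < 1 := hφ.norm_lt h₁
  have hlt : ∀ z ∈ O, ‖u * φ z‖ < 1 := fun z hz => by
    rw [norm_mul, hu, one_mul]; exact hφ.norm_lt hz
  have hn1 : ∀ z ∈ O, 1 - u * φ z ≠ 0 := fun z hz h => by
    have := hlt z hz
    rw [← sub_eq_zero.1 h] at this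
    simp at this
  -- `H` maps into the right half-plane, and `W = log H` into the strip of width `π`
  set H : ℂ → ℂ := fun z => (1 + u * φ z) / (1 - u * φ z) with hH
  have hHre : ∀ z ∈ O, 0 < (H z).re := by
    intro z hz
    have h2 : 0 < normSq (1 - u * φ z) := normSq_pos.2 (hn1 z hz)
    have h3 := hlt z hz
    rw [← sq_lt_one_iff₀ (norm_nonneg _), Complex.sq_norm, normSq_apply] at h3
    rw [hH]
    simp only [div_re, ← add_div]
    apply div_pos _ h2
    simp only [add_re, add_im, sub_re, sub_im, one_re, one_im]
    nlinarith
  have hHs : ∀ z ∈ O, H z ∈ slitPlane := fun z hz => Or.inl (hHre z hz)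
  have hH0 : ∀ z ∈ O, H z ≠ 0 := fun z hz => slitPlane_ne_zero (hHs z hz)
  have hφd : ∀ z ∈ O, HasDerivAt φ (deriv φ z) z := fun z hz =>
    (hφ.diff.differentiableAt (hO.mem_nhds hz)).hasDerivAt
  have hHd : ∀ z ∈ O, HasDerivAt H (2 * u * deriv φ z / (1 - u * φ z) ^ 2) z := fun z hz => by
    have h := (hφd z hz).const_mul u
    refine ((h.const_add 1).fun_div (h.const_sub 1) (hn1 z hz)).congr_deriv ?_
    congr 1
    ring
  set W : ℂ → ℂ := fun z => log (H z) with hW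
  have hWd : ∀ z ∈ O, HasDerivAt W (2 * u * deriv φ z / (1 - u * φ z) ^ 2 / H z) z := fun z hz =>
    (hHd z hz).clog (hHs z hz)
  have hWdiff : DifferentiableOn ℂ W O := fun z hz =>
    (hWd z hz).differentiableAt.differentiableWithinAt
  have hWder : ∀ z ∈ O, deriv W z ≠ 0 := fun z hz => by
    rw [(hWd z hz).deriv]
    exact div_ne_zero (div_ne_zero (mul_ne_zero (mul_ne_zero two_ne_zero hu0) (hφ.der z hz))
      (pow_ne_zero _ (hn1 z hz))) (hH0 z hz)
  have hφH : ∀ z ∈ O, φ z = u⁻¹ * ((H z - 1) / (H z + 1)) := fun z hz => by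
    have h1 := hn1 z hz
    have h2 : H z + 1 ≠ 0 := fun h => by
      have h3 := congrArg re h
      simp only [add_re, one_re, zero_re] at h3
      linarith [hHre z hz]
    have h4 : H z * (1 - u * φ z) = 1 + u * φ z := div_mul_cancel₀ _ h1
    rw [eq_inv_mul_iff_mul_eq₀ hu0, eq_div_iff h2]
    linear_combination -h4
  have hWinj : InjOn W O := by
    intro z hz w hw h
    have h2 := congrArg exp h
    simp only [hW] at h2
    rw [exp_log (hH0 z hz), exp_log (hH0 w hw)] at h2
    apply hφ.inj hz hw
    rw [hφH z hz, hφH w hw, h2]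
  have hH0' : H z₀ = 1 := by simp [hH, hφ.base]
  have hH1 : H z₁ = (((1 + x₁) / (1 - x₁) : ℝ) : ℂ) := by
    simp only [hH, hu1]; push_cast; rfl
  set S := Real.log ((1 + x₁) / (1 - x₁)) with hS
  have hS0 : 0 ≤ S := Real.log_nonneg (by rw [le_div_iff₀ (by linarith)]; linarith)
  have hSS : S ≤ S₀ := by
    refine le_trans ?_ (le_max_right _ _)
    apply Real.log_le_log (div_pos (by linarith) (by linarith))
    rw [div_le_div_iff₀ (by linarith) hc]
    nlinarith
  have hW1 : W z₁ = S := by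
    simp only [hW, hH1]
    rw [← ofReal_log (div_pos (by linarith) (by linarith)).le]
  have hsur : ∀ ζ ∈ rect S, ∃ z ∈ O, W z = ζ := by
    intro ζ hζ
    have hζ' : ζ ∈ rect S₀ := ⟨hζ.1, by linarith [hζ.2.1], hζ.2.2⟩
    obtain ⟨z, hz, hzeq⟩ := hsurj (u⁻¹ * ((exp ζ - 1) / (exp ζ + 1))) (by
      rw [norm_mul, norm_inv, hu, inv_one, one_mul]; exact hrT ζ hζ')
    refine ⟨z, hz, ?_⟩
    have h1 : 0 < (exp ζ).re := re_exp_pos (hζ.2.2.trans one_lt_pi_div_two)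
    have h2 : exp ζ + 1 ≠ 0 := fun h => by
      have h3 := congrArg re h
      simp only [add_re, one_re, zero_re] at h3
      linarith
    have h3 : H z = exp ζ := by
      have h4 := hn1 z hz
      simp only [hH]
      rw [div_eq_iff h4, hzeq]
      field_simp
      ring
    have h5 := abs_lt.1 hζ.2.2
    simp only [hW]
    rw [h3, log_exp (by linarith [Real.pi_gt_three]) (by linarith [Real.pi_gt_three])]
  have hmem : ∀ ζ ∈ rect S, Function.invFunOn W O ζ ∈ O := fun ζ hζ =>
    Function.invFunOn_mem (hsur ζ hζ)
  have hri : ∀ ζ ∈ rect S, W (Function.invFunOn W O ζ) = ζ := fun ζ hζ =>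
    Function.invFunOn_eq (hsur ζ hζ)
  refine ⟨S, W, Function.invFunOn W O, hS0, hWdiff, fun z hz => ?_, hWder, hmem, hri,
    fun ζ hζ => ?_, ?_, ?_⟩
  · simp only [hW, log_im]
    exact abs_arg_lt_pi_div_two_iff.2 (Or.inl (hHre z hz))
  · have := hasDerivAt_invFunOn hO hWdiff hWinj (hmem ζ hζ) (hWder _ (hmem ζ hζ))
    rwa [hri ζ hζ] at this
  · have : W z₀ = 0 := by simp [hW, hH0']
    rw [← this]
    exact hWinj.leftInvOn_invFunOn h₀
  · rw [← hW1]
    exact hWinj.leftInvOn_invFunOn h₁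

/-! ### Distortion along the segment -/

namespace StripCoord

variable {O : Set ℂ} {z₀ z₁ : ℂ} {S : ℝ} {W Ψ : ℂ → ℂ}

lemma diffOn (h : StripCoord O z₀ z₁ S W Ψ) : DifferentiableOn ℂ Ψ (rect S) := fun ζ hζ =>
  (h.hasDeriv ζ hζ).differentiableAt.differentiableWithinAt

lemma deriv_diffOn (h : StripCoord O z₀ z₁ S W Ψ) : DifferentiableOn ℂ (deriv Ψ) (rect S) :=
  h.diffOn.deriv (isOpen_rect S)

lemma deriv_ne (h : StripCoord O z₀ z₁ S W Ψ) {ζ : ℂ} (hζ : ζ ∈ rect S) : deriv Ψ ζ ≠ 0 := by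
  rw [(h.hasDeriv ζ hζ).deriv]
  exact inv_ne_zero (h.der _ (h.mem ζ hζ))

/-- Along the segment, `|Ψ'|` is bounded below by the distance to the boundary: the Schwarz lemma
for `exp ∘ W`, which maps into the right half-plane. -/
lemma infDist_le (h : StripCoord O z₀ z₁ S W Ψ) (hO : IsOpen O) (hne : Oᶜ.Nonempty) {s : ℝ}
    (hs : s ∈ Icc 0 S) : infDist (Ψ s) Oᶜ ≤ 2 * ‖deriv Ψ s‖ := by
  have hsr := ofReal_mem_rect hs
  have hm := h.mem _ hsr
  set δ := infDist (Ψ s) Oᶜ with hδ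
  have hδ0 : 0 < δ := (hO.isClosed_compl.notMem_iff_infDist_pos hne).1 (by simpa using hm)
  have hbO : ball (Ψ s) δ ⊆ O := by
    have := ball_infDist_subset_compl (s := Oᶜ) (x := Ψ s)
    rwa [compl_compl] at this
  have hWd : ∀ z ∈ O, HasDerivAt W (deriv W z) z := fun z hz =>
    (h.diff.differentiableAt (hO.mem_nhds hz)).hasDerivAt
  have h1 := schwarz_halfPlane (H := fun z => exp (W z)) (w := Ψ s) (h := Real.exp s) hδ0
    (fun z hz => (hWd z (hbO hz)).cexp.differentiableAt.differentiableWithinAt)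
    (fun z hz => re_exp_pos (h.im_lt z (hbO hz))) (by rw [h.right_inv _ hsr, ofReal_exp])
  rw [(hWd _ hm).cexp.deriv, h.right_inv _ hsr, norm_mul, ← ofReal_exp, norm_real,
    Real.norm_of_nonneg (Real.exp_pos _).le, mul_comm,
    mul_le_mul_iff_left₀ (Real.exp_pos _)] at h1
  rw [(h.hasDeriv _ hsr).deriv, norm_inv, ← div_eq_mul_inv,
    le_div_iff₀ (norm_pos_iff.2 (h.der _ hm))]
  rw [le_div_iff₀ hδ0] at h1
  linarith

/-- The pre-Schwarzian `Ψ'' / Ψ'` is bounded along the segment by an absolute constant. -/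
lemma norm_deriv_deriv_le (h : StripCoord O z₀ z₁ S W Ψ) (hO : IsOpen O)
    (hsc : IsSimplyConnected O) (hne : Oᶜ.Nonempty) {s : ℝ} (hs : s ∈ Icc 0 S) :
    ‖deriv (deriv Ψ) s‖ ≤ 131072 * ‖deriv Ψ s‖ := by
  have hb := ball_subset_rect hs
  have hK : ∀ ζ ∈ ball (s : ℂ) (1 / 2), ‖deriv Ψ ζ‖ ≤ 128 * infDist (Ψ ζ) Oᶜ := by
    intro ζ hζ
    have hsub : ball ζ (1 / 2) ⊆ rect S := fun w hw => hb (by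
      rw [mem_ball] at *
      linarith [dist_triangle w ζ (s : ℂ)])
    have := weak_koebe hO hsc hne (by norm_num) (h.diffOn.mono hsub) fun w hw => h.mem _ (hsub hw)
    norm_num at this
    exact this
  have hcb : closedBall (s : ℂ) (1 / 256) ⊆ ball (s : ℂ) (1 / 2) :=
    closedBall_subset_ball (by norm_num)
  have hcr : closedBall (s : ℂ) (1 / 256) ⊆ rect S :=
    (hcb.trans (ball_subset_ball (by norm_num))).trans hb
  obtain ⟨ζ, hζ, hmax⟩ := (isCompact_closedBall (s : ℂ) (1 / 256)).exists_isMaxOn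
    ⟨_, mem_closedBall_self (by norm_num)⟩ (h.deriv_diffOn.continuousOn.mono hcr).norm
  have hmax' : ∀ w ∈ closedBall (s : ℂ) (1 / 256), ‖deriv Ψ w‖ ≤ ‖deriv Ψ ζ‖ := fun w hw => hmax hw
  set M := ‖deriv Ψ ζ‖ with hM
  have hmv : ‖Ψ ζ - Ψ s‖ ≤ M * ‖ζ - s‖ :=
    (convex_closedBall (s : ℂ) (1 / 256)).norm_image_sub_le_of_norm_deriv_le
      (fun w hw => (h.hasDeriv w (hcr hw)).differentiableAt) hmax'
      (mem_closedBall_self (by norm_num)) hζ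
  rw [mem_closedBall, dist_eq_norm] at hζ
  have h1 := hK ζ (hcb (by rwa [mem_closedBall, dist_eq_norm]))
  have h2 : infDist (Ψ ζ) Oᶜ ≤ infDist (Ψ s) Oᶜ + dist (Ψ ζ) (Ψ s) := infDist_le_infDist_add_dist
  rw [dist_eq_norm] at h2
  have hM0 : 0 ≤ M := norm_nonneg _
  -- the distance to the boundary varies by at most `M / 256`, so `M ≤ 128 δ + M / 2`
  have h3 : M ≤ 256 * infDist (Ψ s) Oᶜ := by nlinarith
  have h4 := Complex.norm_deriv_le_of_forall_mem_sphere_norm_le (f := deriv Ψ) (c := s)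
    (R := 1 / 256) (C := M) (by norm_num)
    ((h.deriv_diffOn.mono (closure_ball_subset_closedBall.trans hcr)).diffContOnCl)
    (fun w hw => hmax' w (sphere_subset_closedBall hw))
  have h5 := h.infDist_le hO hne hs
  norm_num at h4
  linarith

/-! ### The length of the segment and the test function -/

/-- A branch of `log Ψ'` on the rectangle. -/
lemma exists_log_deriv (h : StripCoord O z₀ z₁ S W Ψ) : ∃ L : ℂ → ℂ, ∀ ζ ∈ rect S,
    HasDerivAt L (deriv (deriv Ψ) ζ / deriv Ψ ζ) ζ ∧ exp (L ζ) = deriv Ψ ζ := by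
  have h2 : DifferentiableOn ℂ (fun ζ => deriv (deriv Ψ) ζ / deriv Ψ ζ) (rect S) :=
    (h.deriv_diffOn.deriv (isOpen_rect S)).fun_div h.deriv_diffOn fun ζ hζ => h.deriv_ne hζ
  obtain ⟨L, hL⟩ := (convex_rect S).exists_forall_hasDerivWithinAt h2
  have hL' : ∀ ζ ∈ rect S, HasDerivAt L (deriv (deriv Ψ) ζ / deriv Ψ ζ) ζ := fun ζ hζ =>
    (hL ζ hζ).hasDerivAt ((isOpen_rect S).mem_nhds hζ)
  have hd : ∀ ζ ∈ rect S, HasDerivAt (fun ζ => deriv Ψ ζ * exp (-L ζ)) 0 ζ := fun ζ hζ => by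
    have h3 := (h.deriv_diffOn.differentiableAt ((isOpen_rect S).mem_nhds hζ)).hasDerivAt
    refine (h3.mul (hL' ζ hζ).neg.cexp).congr_deriv ?_
    have := h.deriv_ne hζ
    field_simp
    ring
  have h0 : (0 : ℂ) ∈ rect S := by
    simpa using ofReal_mem_rect (s := 0) ⟨le_rfl, h.nonneg⟩
  have hconst : ∀ ζ ∈ rect S, deriv Ψ ζ * exp (-L ζ) = deriv Ψ 0 * exp (-L 0) := fun ζ hζ =>
    (convex_rect S).is_const_of_fderivWithin_eq_zero (𝕜 := ℂ)
      (fun w hw => (hd w hw).differentiableAt.differentiableWithinAt)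
      (fun w hw => by
        rw [fderivWithin_of_isOpen (isOpen_rect S) hw, (hd w hw).hasFDerivAt.fderiv]
        ext; simp) hζ h0
  refine ⟨fun ζ => L ζ + log (deriv Ψ 0 * exp (-L 0)), fun ζ hζ => ⟨(hL' ζ hζ).add_const _, ?_⟩⟩
  rw [exp_add, exp_log (mul_ne_zero (h.deriv_ne h0) (exp_ne_zero _)), ← hconst ζ hζ, exp_neg]
  field_simp

lemma continuousOn_deriv (h : StripCoord O z₀ z₁ S W Ψ) :
    ContinuousOn (fun s : ℝ => deriv Ψ s) (Icc 0 S) :=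
  h.deriv_diffOn.continuousOn.comp continuous_ofReal.continuousOn fun _ hs => ofReal_mem_rect hs

/-- If primitives of analytic functions bounded by `1` oscillate by at most `B`, then the length of
the image of the segment is at most a fixed multiple of `B`: test with an `f` for which
`f(Ψ) Ψ'` has nearly constant argument. -/
lemma length_le (h : StripCoord O z₀ z₁ S W Ψ) (hO : IsOpen O) (hsc : IsSimplyConnected O)
    (hne : Oᶜ.Nonempty) {A B : ℝ}
    (hA : ∀ (V : ℝ → ℝ) (M : ℝ), (∀ s, |V s| ≤ M) →
      (∀ s t, |V s - V t| ≤ 131072 * |s - t|) → ∃ g : ℂ → ℂ, Differentiable ℂ g ∧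
      (∀ x : ℝ, ‖g x - V x‖ ≤ 1) ∧ ∀ z : ℂ, |z.im| ≤ 2 → |(g z).im| ≤ A)
    (hB : ∀ f : ℂ → ℂ, DifferentiableOn ℂ f O → (∀ z ∈ O, ‖f z‖ ≤ 1) →
      ∃ F : ℂ → ℂ, (∀ z ∈ O, HasDerivAt F (f z) z) ∧ ‖F z₁ - F z₀‖ ≤ B) :
    ∫ s in (0:ℝ)..S, ‖deriv Ψ s‖ ≤ B / (Real.exp (-A - 1) * Real.cos 1) := by
  obtain ⟨L, hL⟩ := h.exists_log_deriv
  have hS := h.nonneg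
  have hv : ∀ s ∈ Icc 0 S, ∀ t ∈ Icc 0 S, |(L s).im - (L t).im| ≤ 131072 * |s - t| := by
    intro s hs t ht
    have h1 := (convex_Icc (0:ℝ) S).norm_image_sub_le_of_norm_hasDerivWithin_le (C := 131072)
      (f := fun s : ℝ => L s)
      (fun x hx => (hL x (ofReal_mem_rect hx)).1.comp_ofReal.hasDerivWithinAt)
      (fun x hx => by
        rw [norm_div, div_le_iff₀ (norm_pos_iff.2 (h.deriv_ne (ofReal_mem_rect hx)))]
        exact h.norm_deriv_deriv_le hO hsc hne hx) ht hs
    rw [← sub_im]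
    exact (abs_im_le_norm _).trans h1
  -- extend the argument of `Ψ'` from the segment to the line by constants
  have hcl : ∀ s : ℝ, (projIcc 0 S hS s : ℝ) ∈ Icc 0 S := fun s => (projIcc 0 S hS s).2
  have hcl2 : ∀ s t : ℝ, |(projIcc 0 S hS s : ℝ) - projIcc 0 S hS t| ≤ |s - t| := fun s t =>
    abs_projIcc_sub_projIcc hS
  obtain ⟨g, hg, hgV, hgA⟩ := hA (fun s => (L (projIcc 0 S hS s : ℝ)).im)
    (|(L (0:ℝ)).im| + 131072 * S)
    (fun s => by
      have h1 := hv _ (hcl s) 0 ⟨le_rfl, hS⟩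
      have h2 : |(projIcc 0 S hS s : ℝ) - 0| ≤ S := by
        rw [sub_zero, abs_of_nonneg (hcl s).1]; exact (hcl s).2
      have h3 := abs_sub_abs_le_abs_sub (L (projIcc 0 S hS s : ℝ)).im (L (0:ℝ)).im
      linarith)
    (fun s t => (hv _ (hcl s) _ (hcl t)).trans (by
      have := hcl2 s t
      linarith))
  have hgs : ∀ s ∈ Icc 0 S, ‖g s - ((L s).im : ℝ)‖ ≤ 1 := fun s hs => by
    have := hgV s
    rwa [projIcc_of_mem hS hs] at this
  set f : ℂ → ℂ := fun z => exp (-(A : ℂ) - I * g (W z)) with hf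
  obtain ⟨F, hF, hFB⟩ := hB f
    (by
      have : DifferentiableOn ℂ (fun z => g (W z)) O := hg.comp_differentiableOn h.diff
      exact ((differentiableOn_const _).sub (this.const_mul I)).cexp)
    (fun z hz => by
      rw [hf, norm_exp, Real.exp_le_one_iff]
      have h1 := (abs_le.1 (hgA (W z) (by
        linarith [h.im_lt z hz, Real.pi_lt_four]))).2
      simp
      linarith)
  have hder : ∀ s ∈ Icc 0 S, HasDerivAt (fun s : ℝ => (F (Ψ s)).re)
      (f (Ψ s) * deriv Ψ s).re s := fun s hs => by
    have hr := ofReal_mem_rect hs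
    have h1 := (hF _ (h.mem _ hr)).comp (s : ℂ) (h.hasDeriv _ hr).differentiableAt.hasDerivAt
    exact h1.real_of_complex
  have hlow : ∀ s ∈ Icc 0 S, Real.exp (-A - 1) * Real.cos 1 * ‖deriv Ψ s‖
      ≤ (f (Ψ s) * deriv Ψ s).re := by
    intro s hs
    have hr := ofReal_mem_rect hs
    set e := g s - ((L s).im : ℝ) with he
    have he1 := hgs s hs
    have h1 : f (Ψ s) * deriv Ψ s = exp (-(A : ℂ) + (L s).re - I * e) := by
      rw [hf, ← (hL _ hr).2, ← exp_add]
      simp only [h.right_inv _ hr]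
      congr 1
      rw [he]
      conv_lhs => rw [← re_add_im (L s)]
      ring
    have h2 := (abs_le.1 ((abs_im_le_norm e).trans he1)).1
    have h3 := (abs_re_le_norm e).trans he1
    have h4 : Real.cos 1 ≤ Real.cos e.re := by
      rw [← Real.cos_abs e.re]
      exact Real.cos_le_cos_of_nonneg_of_le_pi (abs_nonneg _) (by linarith [Real.pi_gt_three]) h3
    rw [h1, exp_re, ← (hL _ hr).2, norm_exp]
    simp only [sub_re, add_re, neg_re, ofReal_re, mul_re, I_re, I_im, sub_im, add_im, neg_im,
      ofReal_im, mul_im]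
    have h5 : Real.cos (-0 + 0 - (0 * e.im + 1 * e.re)) = Real.cos e.re := by
      rw [← Real.cos_neg e.re]; congr 1; ring
    rw [h5, mul_right_comm, ← Real.exp_add]
    have h6 : (0:ℝ) < Real.cos 1 := Real.cos_one_pos
    gcongr
    linarith
  have hc1 : ContinuousOn (fun s : ℝ => (f (Ψ s) * deriv Ψ s).re) (Icc 0 S) := by
    refine continuous_re.comp_continuousOn (ContinuousOn.mul ?_ h.continuousOn_deriv)
    have h1 : ContinuousOn (fun s : ℝ => exp (-(A : ℂ) - I * g s)) (Icc 0 S) := by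
      have := hg.continuous
      fun_prop
    refine h1.congr fun s hs => ?_
    simp only [hf, h.right_inv _ (ofReal_mem_rect hs)]
  have hftc := intervalIntegral.integral_eq_sub_of_hasDerivAt
    (fun s hs => hder s (by rwa [uIcc_of_le hS] at hs))
    (hc1.intervalIntegrable_of_Icc (μ := MeasureTheory.volume) hS)
  have hmono := intervalIntegral.integral_mono_on hS
    ((h.continuousOn_deriv.norm.intervalIntegrable_of_Icc (μ := MeasureTheory.volume) hS).const_mul _)
    (hc1.intervalIntegrable_of_Icc (μ := MeasureTheory.volume) hS) hlow
  rw [hftc, intervalIntegral.integral_const_mul, h.right, ofReal_zero, h.left, ← sub_re] at hmono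
  rw [le_div_iff₀ (mul_pos (Real.exp_pos _) Real.cos_one_pos), mul_comm]
  exact hmono.trans ((re_le_norm _).trans hFB)

/-- The image of the segment, as a `C¹` path defined on the whole line. -/
lemma exists_path (h : StripCoord O z₀ z₁ S W Ψ) : ∃ γ : ℝ → ℂ, ContDiff ℝ 1 γ ∧ γ 0 = z₀ ∧
    γ 1 = z₁ ∧ (∀ t ∈ Icc (0:ℝ) 1, γ t ∈ O) ∧
    ∫ t in (0:ℝ)..1, ‖deriv γ t‖ = ∫ s in (0:ℝ)..S, ‖deriv Ψ s‖ := by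
  have hS := h.nonneg
  have hmem : ∀ t ∈ Icc (0:ℝ) 1, S * t ∈ Icc 0 S := fun t ht =>
    ⟨mul_nonneg hS ht.1, mul_le_of_le_one_right hS ht.2⟩
  -- extending the velocity, rather than the path, by constants keeps the path `C¹`
  set u : ℝ → ℂ := fun t => S * deriv Ψ ((S * (projIcc (0:ℝ) 1 zero_le_one t : ℝ) : ℝ) : ℂ) with hu
  have huc : Continuous u := by
    refine continuous_const.mul (h.continuousOn_deriv.comp_continuous (f := fun t : ℝ =>
      S * (projIcc (0:ℝ) 1 zero_le_one t : ℝ)) ?_ fun t => hmem _ (projIcc _ _ _ t).2)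
    exact continuous_const.mul (continuous_subtype_val.comp continuous_projIcc)
  have hu1 : ∀ t ∈ Icc (0:ℝ) 1, u t = S * deriv Ψ ((S * t : ℝ) : ℂ) := fun t ht => by
    simp only [hu, projIcc_of_mem zero_le_one ht]
  set γ : ℝ → ℂ := fun t => z₀ + ∫ τ in (0:ℝ)..t, u τ with hγ
  have hγd : ∀ t, HasDerivAt γ (u t) t := fun t =>
    (intervalIntegral.integral_hasDerivAt_right (huc.intervalIntegrable _ _)
      (huc.stronglyMeasurableAtFilter _ _) huc.continuousAt).const_add _
  have hder : deriv γ = u := funext fun t => (hγd t).deriv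
  have hΨd : ∀ t ∈ Icc (0:ℝ) 1, HasDerivAt (fun t : ℝ => Ψ ((S * t : ℝ) : ℂ)) (u t) t := by
    intro t ht
    rw [hu1 t ht]
    have h1 := (h.hasDeriv _ (ofReal_mem_rect (hmem t ht))).differentiableAt.hasDerivAt.comp_ofReal
    have h2 : HasDerivAt (fun t : ℝ => S * t) S t := by
      simpa using (hasDerivAt_id t).const_mul S
    have h3 := HasDerivAt.scomp t h1 h2
    rwa [real_smul] at h3
  have hγΨ : ∀ t ∈ Icc (0:ℝ) 1, γ t = Ψ ((S * t : ℝ) : ℂ) := fun t ht => by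
    have h1 := intervalIntegral.integral_eq_sub_of_hasDerivAt (a := 0) (b := t)
      (fun s hs => hΨd s (by
        rw [uIcc_of_le ht.1] at hs
        exact ⟨hs.1, hs.2.trans ht.2⟩)) (huc.intervalIntegrable _ _)
    simp only [hγ, h1]
    simp [h.left]
  refine ⟨γ, contDiff_one_iff_deriv.2 ⟨fun t => (hγd t).differentiableAt, hder ▸ huc⟩, ?_, ?_,
    fun t ht => ?_, ?_⟩
  · simp [hγ]
  · rw [hγΨ 1 ⟨zero_le_one, le_rfl⟩, mul_one, h.right]
  · rw [hγΨ t ht]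
    exact h.mem _ (ofReal_mem_rect (hmem t ht))
  · have h1 := intervalIntegral.smul_integral_comp_mul_left (a := 0) (b := 1)
      (fun s : ℝ => ‖deriv Ψ s‖) S
    rw [mul_zero, mul_one] at h1
    rw [hder, ← h1, smul_eq_mul, ← intervalIntegral.integral_const_mul]
    refine intervalIntegral.integral_congr fun t ht => ?_
    rw [uIcc_of_le zero_le_one] at ht
    simp only [hu1 t ht, norm_mul, norm_real, Real.norm_of_nonneg hS]

end StripCoord

/-! ### The two implications -/

/-- The substantial direction: boundedness of integration bounds lengths. -/
lemma interiorDiam_lt_top_of_bound {O : Set ℂ} (hO : IsOpen O) (hconn : IsConnected O)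
    (hsc : IsSimplyConnected O) {p : ℂ} (hp : p ∈ O) {C : ℝ}
    (hC : ∀ f F : ℂ → ℂ, DifferentiableOn ℂ f O → (∀ z ∈ O, ‖f z‖ ≤ 1) → F p = 0 →
      (∀ z ∈ O, HasDerivAt F (f z) z) → ∀ z ∈ O, ‖F z‖ ≤ C) : interiorDiam O < ⊤ := by
  -- `f = 1` shows that `O` is bounded
  have hbdd : ∀ z ∈ O, ‖z - p‖ ≤ C := hC (fun _ => 1) (fun z => z - p) (differentiableOn_const _)
    (fun _ _ => by simp) (by simp) fun z _ => (hasDerivAt_id z).sub_const p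
  have hC0 : 0 ≤ C := (norm_nonneg _).trans (hbdd p hp)
  have hne : Oᶜ.Nonempty := by
    refine ⟨p + ((C + 1 : ℝ) : ℂ), fun h => ?_⟩
    have := hbdd _ h
    rw [add_sub_cancel_left, norm_real, Real.norm_of_nonneg (by linarith)] at this
    linarith
  obtain ⟨A, hA⟩ := exists_entire_approx (K := 131072) (by norm_num)
  refine lt_of_le_of_lt ?_
    (ENNReal.ofReal_lt_top (r := (2 * C) / (Real.exp (-A - 1) * Real.cos 1)))
  refine iSup₂_le fun z₀ h₀ => iSup₂_le fun z₁ h₁ => ?_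
  obtain ⟨S, W, Ψ, h⟩ := exists_stripCoord hO hsc hconn h₀ h₁ (R := 2 * C + 1) fun z hz => by
    have := norm_sub_le (z - p) (z₀ - p)
    rw [sub_sub_sub_cancel_right] at this
    linarith [hbdd z hz, hbdd z₀ h₀]
  obtain ⟨γ, hγ, hγ0, hγ1, hγO, hlen⟩ := h.exists_path
  refine iInf₂_le_of_le γ ⟨hγ, hγ0, hγ1, hγO⟩ (ENNReal.ofReal_le_ofReal ?_)
  rw [hlen]
  refine h.length_le hO hsc hne hA fun f hf hf1 => ?_
  obtain ⟨F, hF⟩ := exists_primitive hO hsc hconn hp (R := C + 1)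
    (fun z hz => by linarith [hbdd z hz]) hf
  refine ⟨F, hF, ?_⟩
  have hb := hC f (fun z => F z - F p) hf hf1 (sub_self _) fun z hz => (hF z hz).sub_const _
  have := norm_sub_le (F z₁ - F p) (F z₀ - F p)
  rw [sub_sub_sub_cancel_right] at this
  linarith [hb z₀ h₀, hb z₁ h₁]

lemma exists_bound_of_interiorDiam_lt_top {O : Set ℂ} {p : ℂ} (hp : p ∈ O)
    (hD : interiorDiam O < ⊤) : ∃ C : ℝ, ∀ f F : ℂ → ℂ, DifferentiableOn ℂ f O →
      (∀ z ∈ O, ‖f z‖ ≤ 1) → F p = 0 → (∀ z ∈ O, HasDerivAt F (f z) z) → ∀ z ∈ O, ‖F z‖ ≤ C := by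
  refine ⟨(interiorDiam O).toReal + 1, fun f F hf hf1 hFp hF z hz => ?_⟩
  have h1 : (⨅ γ ∈ {γ : ℝ → ℂ | ContDiff ℝ 1 γ ∧ γ 0 = p ∧ γ 1 = z ∧
      ∀ t ∈ Set.Icc (0:ℝ) 1, γ t ∈ O}, ENNReal.ofReal (∫ t in (0:ℝ)..1, ‖deriv γ t‖))
      < interiorDiam O + 1 := by
    refine lt_of_le_of_lt ?_ (ENNReal.lt_add_right hD.ne one_ne_zero)
    exact le_iSup₂_of_le p hp (le_iSup₂ (f := fun z₁ (_ : z₁ ∈ O) =>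
      ⨅ γ ∈ {γ : ℝ → ℂ | ContDiff ℝ 1 γ ∧ γ 0 = p ∧ γ 1 = z₁ ∧
        ∀ t ∈ Set.Icc (0:ℝ) 1, γ t ∈ O}, ENNReal.ofReal (∫ t in (0:ℝ)..1, ‖deriv γ t‖)) z hz)
  obtain ⟨γ, h2⟩ := iInf_lt_iff.1 h1
  obtain ⟨⟨hγ, hγ0, hγ1, hγO⟩, hlt⟩ := iInf_lt_iff.1 h2
  have hlen : ∫ t in (0:ℝ)..1, ‖deriv γ t‖ ≤ (interiorDiam O).toReal + 1 := by
    have h3 := (ENNReal.ofReal_le_iff_le_toReal (ENNReal.add_ne_top.2 ⟨hD.ne, ENNReal.one_ne_top⟩)).1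
      hlt.le
    rwa [ENNReal.toReal_add hD.ne ENNReal.one_ne_top, ENNReal.toReal_one] at h3
  have hγd : ∀ t, HasDerivAt γ (deriv γ t) t := fun t =>
    (hγ.differentiable one_ne_zero t).hasDerivAt
  have hγ' : Continuous (deriv γ) := hγ.continuous_deriv le_rfl
  have hcont : ContinuousOn (fun t => deriv γ t * f (γ t)) (Icc 0 1) :=
    hγ'.continuousOn.mul (hf.continuousOn.comp hγ.continuous.continuousOn hγO)
  have h4 := intervalIntegral.integral_eq_sub_of_hasDerivAt (a := 0) (b := 1)
    (f := fun t => F (γ t)) (f' := fun t => deriv γ t * f (γ t))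
    (fun t ht => by
      rw [uIcc_of_le zero_le_one] at ht
      exact HasDerivAt.scomp t (hF _ (hγO t ht)) (hγd t))
    (hcont.intervalIntegrable_of_Icc (μ := MeasureTheory.volume) zero_le_one)
  simp only [hγ0, hγ1, hFp, sub_zero] at h4
  rw [← h4]
  refine le_trans ?_ hlen
  refine (intervalIntegral.norm_integral_le_integral_norm zero_le_one).trans ?_
  refine intervalIntegral.integral_mono_on zero_le_one
    (hcont.norm.intervalIntegrable_of_Icc zero_le_one) (hγ'.norm.intervalIntegrable _ _)
    fun t ht => ?_
  rw [norm_mul]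
  exact mul_le_of_le_one_right (norm_nonneg _) (hf1 _ (hγO t ht))
end HInf

/-- The integration operator `J_p` is bounded on `H^∞(O)` iff the interior diameter of the
simply connected domain `O` is finite. -/
theorem integration_operator_bounded_iff_interiorDiam_finite
    (O : Set ℂ) (hne : O.Nonempty) (hO : IsOpen O) (hconn : IsConnected O)
    (hsc : SimplyConnectedSpace O) (p : ℂ) (hp : p ∈ O) :
    (∃ C : ℝ, ∀ f F : ℂ → ℂ, DifferentiableOn ℂ f O → (∀ z ∈ O, ‖f z‖ ≤ 1) →
        F p = 0 → (∀ z ∈ O, HasDerivAt F (f z) z) → ∀ z ∈ O, ‖F z‖ ≤ C) ↔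
      interiorDiam O < ⊤ :=
  ⟨fun ⟨_, hC⟩ => HInf.interiorDiam_lt_top_of_bound hO hconn hsc hp hC,
    HInf.exists_bound_of_interiorDiam_lt_top hp⟩
end

section
/- There exist constants C > 0 and C' ≥ 0 with the following property: for every univalent (injective analytic) function φ : 𝔻 → ℂ with φ'(0) = 1, there exists an analytic function g : 𝔻 → ℂ with sup_{z∈𝔻} |g(z)| ≤ C such that Re ∫₀¹ g(x) φ'(x) dx ≥ (1/C) ∫₀¹ |φ'(x)| dx − C', the integrals being taken over the radius [0,1). -/
/-!
The function `g` is an approximation, on the radius, of the unimodular function `conj φ' / |φ'|`: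
if `‖g - conj φ' / |φ'|‖ ≤ 1/2` on `[0, 1)`, then `Re (g φ') ≥ |φ'| / 2` pointwise, and the
estimate holds with `C' = 0` after integration.

*Slow variation of the phase.* For univalent `φ` one has the distortion estimate
`(1 - x) |φ''(x)| ≤ 384 |φ'(x)|` (`norm_deriv_deriv_le_at`; the sharp constant is irrelevant).
Hence, in the parameter `s = -log (1 - x)`, a branch of `log φ'`, and with it
the phase `a(s) = exp (-i Im log φ')`, is Lipschitz with an absolute constant.

*Approximation of a Lipschitz function by a bounded analytic one.* The map `z ↦ -log (1 - z)`
carries the disk into the strip `|Im ζ| ≤ π/2` and the radius onto `[0, ∞)`. Convolving `a` with a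
normalized Gaussian `exp (-n ζ²)` gives an entire function, bounded by `exp (n π² / 4)` on the strip
and within `1/2` of `a` on the real line once `n` is large compared with the Lipschitz constant
(`exists_entire_approx`).

*The distortion estimate.* It suffices to bound `f''(0) / f'(0)` for `f` univalent on the disk. Let
`w` be an omitted value closest to `f 0` and `W = w - f 0`. The Schwarz lemma for `f⁻¹` gives
`|W| ≤ |f'(0)|` (`exists_nearest_omitted_value`). The branch `h` of `√(1 - (f - f 0) / W)` with
`h 0 = 1` never takes both values `u` and `-u`, and for `u` near `1` it takes one of them, since `f`
covers the disk of radius `|W|` about `f 0`; by connectedness it is always `u`. So `h` stays away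
from `-1`, `k = 1 / (h + 1)` is bounded (`exists_bounded_transform`), and Cauchy's estimates for `k`
bound `f''(0)`.
-/

open Set Metric Filter Topology MeasureTheory

/-! ### Injective holomorphic functions -/

theorem map_nhds_eq_of_injOn {U : Set ℂ} (hU : IsOpen U) {f : ℂ → ℂ}
    (hf : DifferentiableOn ℂ f U) (hinj : InjOn f U) {z : ℂ} (hz : z ∈ U) :
    map f (𝓝 z) = 𝓝 (f z) := by
  have ha : AnalyticAt ℂ f z := hf.analyticAt (hU.mem_nhds hz)
  refine le_antisymm ha.continuousAt ?_
  refine ha.eventually_constant_or_nhds_le_map_nhds.resolve_left fun hc => ?_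
  have h1 : ∀ᶠ y in 𝓝[≠] z, f y = f z ∧ y ∈ U :=
    (hc.and (hU.mem_nhds hz)).filter_mono nhdsWithin_le_nhds
  obtain ⟨y, ⟨hy1, hy2⟩, hy3⟩ := (h1.and self_mem_nhdsWithin).exists
  exact hy3 (hinj hy2 hz hy1)

/-- An injective holomorphic function has nonvanishing derivative and a holomorphic inverse. The
inverse is continuous by the open mapping theorem, differentiable at images of points where
`deriv f ≠ 0`, and the images of the isolated zeros of `deriv f` are removable singularities; then
the chain rule shows that there are no such zeros. -/
theorem hasDerivAt_invFunOn_of_injOn {U : Set ℂ} (hU : IsOpen U) {f : ℂ → ℂ}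
    (hf : DifferentiableOn ℂ f U) (hinj : InjOn f U) {z : ℂ} (hz : z ∈ U) :
    deriv f z ≠ 0 ∧ HasDerivAt (Function.invFunOn f U) (deriv f z)⁻¹ (f z) := by
  set g := Function.invFunOn f U with hg
  have hgf : ∀ y ∈ U, g (f y) = y := fun y hy => hinj.leftInvOn_invFunOn hy
  have hmap : ∀ y ∈ U, map f (𝓝 y) = 𝓝 (f y) := fun y hy => map_nhds_eq_of_injOn hU hf hinj hy
  have hcont : ∀ y ∈ U, ContinuousAt g (f y) := by
    intro y hy
    rw [ContinuousAt, ← hmap y hy, tendsto_map'_iff, hgf y hy]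
    exact tendsto_id.congr' (by filter_upwards [hU.mem_nhds hy] with x hx using (hgf x hx).symm)
  have hright : ∀ y ∈ U, ∀ᶠ v in 𝓝 (f y), f (g v) = v := by
    intro y hy
    rw [← hmap y hy, eventually_map]
    filter_upwards [hU.mem_nhds hy] with x hx
    rw [hgf x hx]
  have hderiv : ∀ y ∈ U, deriv f y ≠ 0 → HasDerivAt g (deriv f y)⁻¹ (f y) := by
    intro y hy hne
    refine HasDerivAt.of_local_left_inverse (hcont y hy) ?_ hne (hright y hy)
    rw [hgf y hy]
    exact (hf.differentiableAt (hU.mem_nhds hy)).hasDerivAt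
  have ha : AnalyticAt ℂ (deriv f) z := (hf.analyticAt (hU.mem_nhds hz)).deriv
  have hev : ∀ᶠ y in 𝓝[≠] z, deriv f y ≠ 0 := by
    refine ha.eventually_eq_zero_or_eventually_ne_zero.resolve_left fun h0 => ?_
    -- a vanishing derivative near `z` would make `f` locally constant
    obtain ⟨ε, hε, hb⟩ := Metric.eventually_nhds_iff_ball.1 (h0.and (hU.mem_nhds hz))
    have hconst : ∀ y ∈ ball z ε, f y = f z := fun y hy =>
      (convex_ball z ε).is_const_of_fderivWithin_eq_zero (𝕜 := ℂ)
        (fun x hx => (hf.differentiableAt (hU.mem_nhds (hb x hx).2)).differentiableWithinAt)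
        (fun x hx => by
          rw [fderivWithin_of_isOpen isOpen_ball hx]
          ext
          simpa using (hb x hx).1) hy (mem_ball_self hε)
    have hy : z + (ε / 2 : ℝ) ∈ ball z ε := by
      simp [abs_of_pos hε, hε]
    have := hinj (hb _ hy).2 hz (hconst _ hy)
    simp at this
    exact hε.ne' this
  have hdiff : DifferentiableAt ℂ g (f z) := by
    have hpunct : ∀ᶠ v in 𝓝[≠] (f z), DifferentiableAt ℂ g v := by
      rw [eventually_nhdsWithin_iff] at hev ⊢
      rw [← hmap z hz, eventually_map]
      filter_upwards [hev, hU.mem_nhds hz] with y hy hyU hne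
      exact (hderiv y hyU (hy fun h => hne (by rw [h]; rfl))).differentiableAt
    exact (Complex.analyticAt_of_differentiable_on_punctured_nhds_of_continuousAt hpunct
      (hcont z hz)).differentiableAt
  have hne : deriv f z ≠ 0 := by
    intro h0
    have h1 : HasDerivAt f 0 z := by
      rw [← h0]; exact (hf.differentiableAt (hU.mem_nhds hz)).hasDerivAt
    have h2 : HasDerivAt (g ∘ f) (deriv g (f z) * 0) z := hdiff.hasDerivAt.comp z h1
    have h3 : HasDerivAt (g ∘ f) 1 z := (hasDerivAt_id z).congr_of_eventuallyEq
      (by filter_upwards [hU.mem_nhds hz] with x hx using hgf x hx)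
    simpa using h2.unique h3
  exact ⟨hne, hderiv z hz hne⟩

/-- A nonvanishing holomorphic function on a disk has a holomorphic logarithm. -/
theorem exists_log_of_ne_zero {c : ℂ} {r : ℝ} {q : ℂ → ℂ} (hq : DifferentiableOn ℂ q (ball c r))
    (h0 : ∀ z ∈ ball c r, q z ≠ 0) :
    ∃ L : ℂ → ℂ, (∀ z ∈ ball c r, HasDerivAt L (deriv q z / q z) z) ∧
      ∀ z ∈ ball c r, Complex.exp (L z) = q z := by
  have hd : DifferentiableOn ℂ (fun z => deriv q z / q z) (ball c r) :=
    (hq.deriv isOpen_ball).div hq h0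
  obtain ⟨L, hLc, hL⟩ := hd.isExactOn_ball.with_val_at c (Complex.log (q c))
  refine ⟨L, hL, fun z hz => ?_⟩
  have hc : c ∈ ball c r := mem_ball_self (nonempty_ball.1 ⟨z, hz⟩)
  have hder : ∀ y ∈ ball c r, HasDerivAt (fun z => q z * Complex.exp (-L z)) 0 y := by
    intro y hy
    have h1 := (hq.differentiableAt (isOpen_ball.mem_nhds hy)).hasDerivAt.mul (hL y hy).neg.cexp
    convert! h1 using 1
    field_simp [h0 y hy]
    ring
  have hconst := (convex_ball c r).is_const_of_fderivWithin_eq_zero (𝕜 := ℂ)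
    (fun x hx => (hder x hx).differentiableAt.differentiableWithinAt)
    (fun x hx => by
      rw [fderivWithin_of_isOpen isOpen_ball hx]
      ext
      simpa using (hder x hx).deriv) hz hc
  simp only [hLc, Complex.exp_neg, Complex.exp_log (h0 c hc)] at hconst
  rw [mul_inv_cancel₀ (h0 c hc)] at hconst
  field_simp at hconst
  exact hconst.symm

/-! ### The distortion estimate -/

/-- An omitted value `w` nearest to `f 0`; its distance to `f 0` is at most `|f'(0)|`. -/
theorem exists_nearest_omitted_value {f : ℂ → ℂ} (hf : DifferentiableOn ℂ f (ball 0 1))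
    (hinj : InjOn f (ball 0 1)) :
    ∃ w : ℂ, w ∉ f '' ball 0 1 ∧ ball (f 0) ‖w - f 0‖ ⊆ f '' ball 0 1 ∧
      ‖w - f 0‖ ≤ ‖deriv f 0‖ := by
  have h0 : (0 : ℂ) ∈ ball (0 : ℂ) 1 := mem_ball_self one_pos
  obtain ⟨hne, hinv⟩ := hasDerivAt_invFunOn_of_injOn isOpen_ball hf hinj h0
  set g := Function.invFunOn f (ball 0 1) with hg
  -- the Schwarz lemma for the inverse function
  have hschwarz : ∀ R : ℝ, 0 < R → ball (f 0) R ⊆ f '' ball 0 1 → R ≤ ‖deriv f 0‖ := by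
    intro R hR hsub
    have hd : DifferentiableOn ℂ g (ball (f 0) R) := by
      intro v hv
      obtain ⟨z, hz, rfl⟩ := hsub hv
      exact (hasDerivAt_invFunOn_of_injOn isOpen_ball hf hinj
        hz).2.differentiableAt.differentiableWithinAt
    have hgf0 : g (f 0) = 0 := hinj.leftInvOn_invFunOn h0
    have hmaps : MapsTo g (ball (f 0) R) (closedBall (g (f 0)) 1) := by
      intro v hv
      rw [hgf0]
      exact ball_subset_closedBall (Function.invFunOn_mem (hsub hv))
    have := Complex.norm_deriv_le_div_of_mapsTo_ball hd hmaps hR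
    rw [hinv.deriv, norm_inv, inv_eq_one_div] at this
    exact (one_div_le_one_div (norm_pos_iff.2 hne) hR).1 this
  have hopen : IsOpen (f '' ball 0 1) := by
    rw [isOpen_iff_mem_nhds]
    rintro _ ⟨z, hz, rfl⟩
    rw [← map_nhds_eq_of_injOn isOpen_ball hf hinj hz]
    exact image_mem_map (isOpen_ball.mem_nhds hz)
  have hcompl : (f '' ball 0 1)ᶜ.Nonempty := by
    by_contra h
    rw [not_nonempty_iff_eq_empty, compl_empty_iff] at h
    have := hschwarz (‖deriv f 0‖ + 1) (by positivity) (by rw [h]; exact subset_univ _)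
    linarith
  obtain ⟨w, hw, hdist⟩ := hopen.isClosed_compl.exists_infDist_eq_dist hcompl (f 0)
  have hwf : 0 < ‖w - f 0‖ := norm_pos_iff.2 fun h =>
    hw (by rw [sub_eq_zero.1 h]; exact mem_image_of_mem f h0)
  have hsub : ball (f 0) ‖w - f 0‖ ⊆ f '' ball 0 1 := by
    intro v hv
    by_contra hv'
    have h1 := infDist_le_dist_of_mem (x := f 0) (mem_compl hv')
    rw [hdist, dist_comm, dist_eq_norm, dist_comm] at h1
    exact absurd (mem_ball.1 hv) (not_lt.2 h1)
  exact ⟨w, hw, hsub, hschwarz _ hwf hsub⟩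

/-- The square root transform: `k = 1 / (h + 1)` with `h ^ 2 = 1 - (f - f 0) / W` and `h 0 = 1`,
so that `f = f 0 + W (1 - h ^ 2) = f 0 + W (2 / k - 1 / k ^ 2)`. -/
theorem exists_bounded_transform {f : ℂ → ℂ} (hf : DifferentiableOn ℂ f (ball 0 1))
    (hinj : InjOn f (ball 0 1)) :
    ∃ (W : ℂ) (k : ℂ → ℂ), W ≠ 0 ∧ ‖W‖ ≤ ‖deriv f 0‖ ∧ DifferentiableOn ℂ k (ball 0 1) ∧
      k 0 = 1 / 2 ∧ (∀ z ∈ ball (0 : ℂ) 1, k z ≠ 0 ∧ ‖k z‖ ≤ 4) ∧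
      ∀ z ∈ ball (0 : ℂ) 1, f z = f 0 + W * (2 / k z - 1 / k z ^ 2) := by
  have h0 : (0 : ℂ) ∈ ball (0 : ℂ) 1 := mem_ball_self one_pos
  obtain ⟨w, hw, hsub, hle⟩ := exists_nearest_omitted_value hf hinj
  set W := w - f 0 with hW
  have hW0 : W ≠ 0 := fun h => hw (by rw [sub_eq_zero.1 h]; exact mem_image_of_mem f h0)
  have hq : DifferentiableOn ℂ (fun z => 1 - (f z - f 0) / W) (ball 0 1) :=
    ((hf.sub_const _).div_const _).const_sub _
  have hq0 : ∀ z ∈ ball (0 : ℂ) 1, 1 - (f z - f 0) / W ≠ 0 := by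
    intro z hz h
    rw [sub_eq_zero, eq_comm, div_eq_one_iff_eq hW0, hW, sub_left_inj] at h
    exact hw (h ▸ mem_image_of_mem f hz)
  obtain ⟨L, hL, hexp⟩ := exists_log_of_ne_zero hq hq0
  have hLd : DifferentiableOn ℂ L (ball 0 1) := fun z hz =>
    (hL z hz).differentiableAt.differentiableWithinAt
  -- `h` is the branch of `√(1 - (f - f 0) / W)` with `h 0 = 1`
  set h : ℂ → ℂ := fun z => Complex.exp ((L z - L 0) / 2) with hh
  have hh0 : h 0 = 1 := by simp [hh]
  have hhne : ∀ z, h z ≠ 0 := fun z => Complex.exp_ne_zero _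
  have hhd : DifferentiableOn ℂ h (ball 0 1) := ((hLd.sub_const _).div_const _).cexp
  have hhsq : ∀ z ∈ ball (0 : ℂ) 1, h z ^ 2 = 1 - (f z - f 0) / W := by
    intro z hz
    have e0 := hexp 0 h0
    simp only [sub_self, zero_div, sub_zero] at e0
    rw [hh, ← Complex.exp_nat_mul]
    push_cast
    rw [mul_div_cancel₀ _ two_ne_zero, Complex.exp_sub, hexp z hz, e0, div_one]
  have hfh : ∀ z ∈ ball (0 : ℂ) 1, f z = f 0 + W * (1 - h z ^ 2) := by
    intro z hz
    rw [hhsq z hz]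
    field_simp
    ring
  have hhinj : ∀ y ∈ ball (0 : ℂ) 1, ∀ z ∈ ball (0 : ℂ) 1, h y ^ 2 = h z ^ 2 → y = z := by
    intro y hy z hz hyz
    exact hinj hy hz (by rw [hfh y hy, hfh z hz, hyz])
  have hhopen : IsOpen (h '' ball 0 1) := by
    rw [isOpen_iff_mem_nhds]
    rintro _ ⟨z, hz, rfl⟩
    rw [← map_nhds_eq_of_injOn isOpen_ball hhd
      (fun y hy z hz hyz => hhinj y hy z hz (by rw [hyz])) hz]
    exact image_mem_map (isOpen_ball.mem_nhds hz)
  -- `f` covers the disk of radius `‖W‖` about `f 0`, and `‖1 - u ^ 2‖ < 1` for `u` near `1`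
  have hcover : ∀ u ∈ ball (1 : ℂ) (1 / 4), u ∈ h '' ball 0 1 ∨ -u ∈ h '' ball 0 1 := by
    intro u hu
    have hu' : ‖u - 1‖ < 1 / 4 := by rwa [mem_ball, dist_eq_norm] at hu
    have h1 : ‖1 - u ^ 2‖ < 1 := by
      have e : 1 - u ^ 2 = -((u - 1) * ((u - 1) + 2)) := by ring
      have h2 : ‖(u - 1) + 2‖ ≤ 1 / 4 + 2 := by
        refine (norm_add_le _ _).trans ?_
        rw [Complex.norm_ofNat]; linarith
      rw [e, norm_neg, norm_mul]
      nlinarith [norm_nonneg (u - 1), norm_nonneg ((u - 1) + 2)]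
    have h3 : f 0 + W * (1 - u ^ 2) ∈ ball (f 0) ‖W‖ := by
      rw [mem_ball, dist_eq_norm, add_sub_cancel_left, norm_mul]
      exact mul_lt_of_lt_one_right (norm_pos_iff.2 hW0) h1
    obtain ⟨z, hz, hzu⟩ := hsub h3
    rw [hfh z hz, add_right_inj, mul_right_inj' hW0, sub_right_inj] at hzu
    rcases sq_eq_sq_iff_eq_or_eq_neg.1 hzu with h | h
    · exact Or.inl ⟨z, hz, h⟩
    · exact Or.inr ⟨z, hz, h⟩
  have hdisj : ∀ u, u ∈ h '' ball 0 1 → -u ∈ h '' ball 0 1 → False := by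
    rintro _ ⟨y, hy, rfl⟩ ⟨z, hz, hyz⟩
    have := hhinj z hz y hy (by rw [hyz, neg_sq])
    subst this
    exact hhne z (self_eq_neg.1 hyz)
  have hfar : ∀ z ∈ ball (0 : ℂ) 1, 1 / 4 ≤ ‖h z + 1‖ := by
    intro z hz
    by_contra! hlt
    have hopen' : IsOpen ((fun u : ℂ => -u) ⁻¹' (h '' ball 0 1)) := hhopen.preimage continuous_neg
    have hmem : -h z ∈ ball (1 : ℂ) (1 / 4) := by
      have e : -h z - 1 = -(h z + 1) := by ring
      rwa [mem_ball, dist_eq_norm, e, norm_neg]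
    -- `ball 1 (1/4)` is connected and covered by the disjoint open sets `h(𝔻)` and `-h(𝔻)`
    obtain ⟨u, -, hu1, hu2⟩ := (convex_ball (1 : ℂ) (1 / 4)).isPreconnected _ _ hhopen hopen'
      hcover ⟨1, mem_ball_self (by norm_num), 0, h0, hh0⟩
      ⟨-h z, hmem, by simpa using mem_image_of_mem h hz⟩
    exact hdisj u hu1 hu2
  have hne1 : ∀ z ∈ ball (0 : ℂ) 1, h z + 1 ≠ 0 := fun z hz => by
    rw [← norm_pos_iff]; linarith [hfar z hz]
  refine ⟨W, fun z => 1 / (h z + 1), hW0, hle, ?_, ?_, fun z hz => ⟨?_, ?_⟩, fun z hz => ?_⟩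
  · exact (differentiableOn_const _).div (hhd.add_const _) hne1
  · simp only [hh0]; norm_num
  · exact one_div_ne_zero (hne1 z hz)
  · rw [norm_div, norm_one, div_le_iff₀ (norm_pos_iff.2 (hne1 z hz))]
    linarith [hfar z hz]
  · rw [hfh z hz]
    field_simp [hne1 z hz]
    ring

/-- A weak form of Bieberbach's bound `|a₂| ≤ 2 |a₁|`. -/
theorem norm_deriv_deriv_le_of_injOn {f : ℂ → ℂ} (hf : DifferentiableOn ℂ f (ball 0 1))
    (hinj : InjOn f (ball 0 1)) : ‖deriv (deriv f) 0‖ ≤ 384 * ‖deriv f 0‖ := by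
  have h0 : (0 : ℂ) ∈ ball (0 : ℂ) 1 := mem_ball_self one_pos
  obtain ⟨W, k, hW0, hWle, hk, hk0, hkb, hfk⟩ := exists_bounded_transform hf hinj
  have hk' : DifferentiableOn ℂ (deriv k) (ball 0 1) := hk.deriv isOpen_ball
  have hderiv : ∀ z ∈ ball (0 : ℂ) 1,
      deriv f z = W * (2 * deriv k z / k z ^ 3 - 2 * deriv k z / k z ^ 2) := by
    intro z hz
    have hkz := (hk.differentiableAt (isOpen_ball.mem_nhds hz)).hasDerivAt
    have hz0 := (hkb z hz).1
    have h1 : HasDerivAt (fun z => f 0 + W * (2 / k z - 1 / k z ^ 2))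
        (W * (2 * deriv k z / k z ^ 3 - 2 * deriv k z / k z ^ 2)) z := by
      have := ((((hasDerivAt_const z (2 : ℂ)).div hkz hz0).sub
        ((hasDerivAt_const z (1 : ℂ)).div (hkz.pow 2) (pow_ne_zero 2 hz0))).const_mul W).const_add
        (f 0)
      convert! this using 1
      simp only [Pi.pow_apply]
      field_simp
      push_cast
      ring
    refine (h1.congr_of_eventuallyEq ?_).deriv
    filter_upwards [isOpen_ball.mem_nhds hz] with y hy using hfk y hy
  have hd2 : deriv (deriv f) 0 = W * (8 * deriv (deriv k) 0 - 64 * deriv k 0 ^ 2) := by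
    have hkz := (hk.differentiableAt (isOpen_ball.mem_nhds h0)).hasDerivAt
    have hkz2 := (hk'.differentiableAt (isOpen_ball.mem_nhds h0)).hasDerivAt
    have hz0 := (hkb 0 h0).1
    have h1 : HasDerivAt (fun z => W * (2 * deriv k z / k z ^ 3 - 2 * deriv k z / k z ^ 2))
        (W * (8 * deriv (deriv k) 0 - 64 * deriv k 0 ^ 2)) 0 := by
      have := ((((hkz2.const_mul 2).div (hkz.pow 3) (pow_ne_zero 3 hz0)).sub
        ((hkz2.const_mul 2).div (hkz.pow 2) (pow_ne_zero 2 hz0)))).const_mul W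
      convert! this using 1
      simp only [Pi.pow_apply, hk0]
      push_cast
      ring
    refine (h1.congr_of_eventuallyEq ?_).deriv
    filter_upwards [isOpen_ball.mem_nhds h0] with y hy using hderiv y hy
  have hd1 : deriv f 0 = 8 * W * deriv k 0 := by
    rw [hderiv 0 h0, hk0]; ring
  have hcauchy : ∀ c ∈ closedBall (0 : ℂ) (1 / 3), ‖deriv k c‖ ≤ 4 / (1 / 3) := by
    intro c hc
    have hsub : closedBall c (1 / 3) ⊆ ball 0 1 := by
      refine closedBall_subset_ball' ?_
      have := mem_closedBall.1 hc
      linarith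
    exact Complex.norm_deriv_le_of_forall_mem_sphere_norm_le (by norm_num)
      (hk.diffContOnCl_ball hsub)
      fun z hz => (hkb z (hsub (sphere_subset_closedBall hz))).2
  have hk1 : ‖deriv k 0‖ ≤ 12 := by
    have := hcauchy 0 (mem_closedBall_self (by norm_num)); linarith
  have hk2 : ‖deriv (deriv k) 0‖ ≤ 36 := by
    have := Complex.norm_deriv_le_of_forall_mem_sphere_norm_le (f := deriv k) (c := 0)
      (R := 1 / 3) (C := 12) (by norm_num)
      (hk'.diffContOnCl_ball (closedBall_subset_ball (by norm_num)))
      fun z hz => (hcauchy z (sphere_subset_closedBall hz)).trans (by norm_num)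
    linarith
  have hWpos : 0 < ‖W‖ := norm_pos_iff.2 hW0
  have hd1n : ‖deriv f 0‖ = 8 * ‖W‖ * ‖deriv k 0‖ := by rw [hd1]; simp
  calc ‖deriv (deriv f) 0‖ ≤ ‖W‖ * (8 * ‖deriv (deriv k) 0‖ + 64 * ‖deriv k 0‖ ^ 2) := by
        rw [hd2, norm_mul]
        gcongr
        refine (norm_sub_le _ _).trans ?_
        simp
    _ = 8 * ‖W‖ * ‖deriv (deriv k) 0‖ + 8 * ‖deriv k 0‖ * ‖deriv f 0‖ := by rw [hd1n]; ring
    _ ≤ 8 * ‖deriv f 0‖ * 36 + 8 * 12 * ‖deriv f 0‖ := by gcongr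
    _ ≤ 384 * ‖deriv f 0‖ := by linarith

/-- The second coefficient bound, applied to the restriction of `φ` to the disk of center `x` and
radius `1 - x`. -/
theorem norm_deriv_deriv_le_at {φ : ℂ → ℂ} (hφ : DifferentiableOn ℂ φ (ball 0 1))
    (hinj : InjOn φ (ball 0 1)) {x : ℝ} (hx0 : 0 ≤ x) (hx1 : x < 1) :
    (1 - x) * ‖deriv (deriv φ) x‖ ≤ 384 * ‖deriv φ x‖ := by
  have hr : 0 < 1 - x := by linarith
  have hrC : ((1 - x : ℝ) : ℂ) ≠ 0 := by exact_mod_cast hr.ne'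
  have hmaps : MapsTo (fun z : ℂ => ((1 - x : ℝ) : ℂ) * z + x) (ball 0 1) (ball 0 1) := by
    intro z hz
    rw [mem_ball_zero_iff] at hz ⊢
    calc ‖((1 - x : ℝ) : ℂ) * z + x‖ ≤ (1 - x) * ‖z‖ + x := by
          refine (norm_add_le _ _).trans ?_
          rw [norm_mul, Complex.norm_real, Complex.norm_real, Real.norm_of_nonneg hr.le,
            Real.norm_of_nonneg hx0]
      _ < 1 := by nlinarith
  have haff : ∀ z : ℂ, HasDerivAt (fun z : ℂ => ((1 - x : ℝ) : ℂ) * z + x) ((1 - x : ℝ) : ℂ) z :=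
    fun z => by simpa using ((hasDerivAt_id z).const_mul ((1 - x : ℝ) : ℂ)).add_const (x : ℂ)
  have h0 : (0 : ℂ) ∈ ball (0 : ℂ) 1 := mem_ball_self one_pos
  set f : ℂ → ℂ := fun z => φ (((1 - x : ℝ) : ℂ) * z + x) with hf
  have hfd : ∀ z ∈ ball (0 : ℂ) 1,
      HasDerivAt f (deriv φ (((1 - x : ℝ) : ℂ) * z + x) * ((1 - x : ℝ) : ℂ)) z := fun z hz =>
    ((hφ.differentiableAt (isOpen_ball.mem_nhds (hmaps hz))).hasDerivAt).comp z (haff z)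
  have hfd2 : HasDerivAt (deriv f) (deriv (deriv φ) (((1 - x : ℝ) : ℂ) * 0 + x) *
      ((1 - x : ℝ) : ℂ) * ((1 - x : ℝ) : ℂ)) 0 := by
    have h1 := ((((hφ.deriv isOpen_ball).differentiableAt
      (isOpen_ball.mem_nhds (hmaps h0))).hasDerivAt).comp 0 (haff 0)).mul_const ((1 - x : ℝ) : ℂ)
    refine h1.congr_of_eventuallyEq ?_
    filter_upwards [isOpen_ball.mem_nhds h0] with z hz using (hfd z hz).deriv
  have hmain := norm_deriv_deriv_le_of_injOn (f := f)
    (fun z hz => (hfd z hz).differentiableAt.differentiableWithinAt)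
    (fun y hy z hz hyz => by
      have := hinj (hmaps hy) (hmaps hz) hyz
      exact mul_left_cancel₀ hrC (add_right_cancel this))
  rw [hfd2.deriv, (hfd 0 h0).deriv] at hmain
  simp only [mul_zero, zero_add, norm_mul, Complex.norm_real, Real.norm_of_nonneg hr.le] at hmain
  rw [← mul_assoc, mul_comm ‖deriv (deriv φ) x‖] at hmain
  exact le_of_mul_le_mul_right hmain hr

/-! ### Gaussian smoothing -/

theorem norm_cexp_gaussian (n : ℝ) (ζ : ℂ) (s : ℝ) :
    ‖Complex.exp (-n * (ζ - s) ^ 2)‖ = Real.exp (n * ζ.im ^ 2) * Real.exp (-n * (ζ.re - s) ^ 2) := by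
  rw [Complex.norm_exp, ← Real.exp_add]
  congr 1
  simp [pow_two, Complex.mul_re]
  ring

theorem differentiable_gaussian_smoothing {n : ℝ} (hn : 0 < n) {a : ℝ → ℂ} (ha : Continuous a)
    (ha1 : ∀ s, ‖a s‖ ≤ 1) :
    Differentiable ℂ (fun ζ : ℂ => ∫ s : ℝ, a s * Complex.exp (-n * (ζ - s) ^ 2)) := by
  intro ζ₀
  set R : ℝ := ‖ζ₀‖ + 1 with hR
  have hint : ∀ ζ : ℂ, Integrable (fun s : ℝ => a s * Complex.exp (-n * (ζ - s) ^ 2)) := by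
    intro ζ
    have h1 : Integrable (fun s : ℝ => Real.exp (n * ζ.im ^ 2) * Real.exp (-n * (ζ.re - s) ^ 2)) :=
      ((integrable_exp_neg_mul_sq hn).comp_sub_left ζ.re).const_mul _
    refine h1.mono' (Continuous.aestronglyMeasurable (by fun_prop)) (.of_forall fun s => ?_)
    rw [norm_mul, ← norm_cexp_gaussian]
    exact mul_le_of_le_one_left (norm_nonneg _) (ha1 s)
  have hb : Integrable (fun s : ℝ =>
      (2 * n * Real.exp (2 * n * R ^ 2)) * (R * Real.exp (-(n / 2) * s ^ 2)
        + ‖s * Real.exp (-(n / 2) * s ^ 2)‖)) :=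
    (((integrable_exp_neg_mul_sq (half_pos hn)).const_mul R).add
      (integrable_mul_exp_neg_mul_sq (half_pos hn)).norm).const_mul _
  refine (hasDerivAt_integral_of_dominated_loc_of_deriv_le (𝕜 := ℂ)
    (F' := fun ζ s => a s * (Complex.exp (-n * (ζ - s) ^ 2) * (-n * (2 * (ζ - s)))))
    (ball_mem_nhds ζ₀ one_pos)
    (.of_forall fun ζ => (hint ζ).aestronglyMeasurable) (hint ζ₀)
    (Continuous.aestronglyMeasurable (by fun_prop)) (.of_forall fun s ζ hζ => ?_) hb
    (.of_forall fun s ζ _ => ?_)).2.differentiableAt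
  · have hζR : ‖ζ‖ ≤ R := by
      have := norm_sub_norm_le ζ ζ₀
      rw [mem_ball, dist_eq_norm] at hζ
      linarith
    have him := (Complex.abs_im_le_norm ζ).trans hζR
    have hre := (Complex.abs_re_le_norm ζ).trans hζR
    have him2 : ζ.im ^ 2 ≤ R ^ 2 :=
      sq_le_sq' (by linarith [neg_abs_le ζ.im]) (by linarith [le_abs_self ζ.im])
    have hre2 : ζ.re ^ 2 ≤ R ^ 2 :=
      sq_le_sq' (by linarith [neg_abs_le ζ.re]) (by linarith [le_abs_self ζ.re])
    have hexp : ‖Complex.exp (-n * (ζ - s) ^ 2)‖ ≤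
        Real.exp (2 * n * R ^ 2) * Real.exp (-(n / 2) * s ^ 2) := by
      rw [norm_cexp_gaussian, ← Real.exp_add, ← Real.exp_add]
      apply Real.exp_le_exp.2
      nlinarith [mul_nonneg hn.le (sq_nonneg (2 * ζ.re - s)), mul_le_mul_of_nonneg_left him2 hn.le,
        mul_le_mul_of_nonneg_left hre2 hn.le]
    have hlin : ‖(-n * (2 * (ζ - s)) : ℂ)‖ ≤ 2 * n * (R + |s|) := by
      have h1 : ‖ζ - (s : ℂ)‖ ≤ R + |s| := by
        refine (norm_sub_le _ _).trans ?_
        rw [Complex.norm_real, Real.norm_eq_abs]; gcongr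
      simp only [norm_mul, norm_neg, Complex.norm_real, Real.norm_eq_abs, abs_of_pos hn,
        Complex.norm_ofNat]
      nlinarith
    calc ‖a s * (Complex.exp (-n * (ζ - s) ^ 2) * (-n * (2 * (ζ - s))))‖
        ≤ 1 * ((Real.exp (2 * n * R ^ 2) * Real.exp (-(n / 2) * s ^ 2)) * (2 * n * (R + |s|))) := by
          rw [norm_mul, norm_mul]
          gcongr
          exact ha1 s
      _ = _ := by
          rw [norm_mul, Real.norm_eq_abs, Real.norm_eq_abs, Real.abs_exp]; ring
  · have h1 : HasDerivAt (fun ζ : ℂ => -n * (ζ - s) ^ 2) (-n * (2 * (ζ - s))) ζ := by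
      have := (((hasDerivAt_id ζ).sub_const (s : ℂ)).pow 2).const_mul (-n : ℂ)
      simpa using this
    exact h1.cexp.const_mul _

/-- A bounded Lipschitz function on the line is uniformly approximated by an entire function that
is bounded on the strip `|Im ζ| ≤ π/2`, with a bound depending on the Lipschitz constant only. -/
theorem exists_entire_approx (M : ℝ) (hM : 0 < M) :
    ∃ C > (0:ℝ), ∀ a : ℝ → ℂ, (∀ s, ‖a s‖ ≤ 1) → (∀ s t, ‖a s - a t‖ ≤ M * |s - t|) →
      ∃ G : ℂ → ℂ, Differentiable ℂ G ∧
        (∀ ζ : ℂ, |ζ.im| ≤ Real.pi / 2 → ‖G ζ‖ ≤ C) ∧ ∀ t : ℝ, ‖G t - a t‖ ≤ 1 / 2 := by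
  set n : ℝ := 12 * M ^ 2 with hn_def
  have hn : 0 < n := by positivity
  refine ⟨Real.exp (n * (Real.pi / 2) ^ 2), Real.exp_pos _, fun a ha1 hlip => ?_⟩
  have hac : Continuous a := by
    refine (LipschitzWith.of_dist_le_mul (K := ⟨M, hM.le⟩) fun s t => ?_).continuous
    rw [dist_eq_norm, Real.dist_eq]; exact hlip s t
  set c : ℝ := (√(Real.pi / n))⁻¹ with hc
  have hsq : 0 < √(Real.pi / n) := Real.sqrt_pos.2 (by positivity)
  have hc0 : 0 < c := inv_pos.2 hsq
  have hgauss : ∀ x : ℝ, ∫ s : ℝ, Real.exp (-n * (x - s) ^ 2) = √(Real.pi / n) := fun x => by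
    rw [integral_sub_left_eq_self (fun s : ℝ => Real.exp (-n * s ^ 2)) volume x, integral_gaussian]
  have hgint : ∀ x : ℝ, Integrable fun s : ℝ => Real.exp (-n * (x - s) ^ 2) := fun x =>
    (integrable_exp_neg_mul_sq hn).comp_sub_left x
  refine ⟨fun ζ => c * ∫ s : ℝ, a s * Complex.exp (-n * (ζ - s) ^ 2),
    (differentiable_gaussian_smoothing hn hac ha1).const_mul _, fun ζ hζ => ?_, fun t => ?_⟩
  · have h1 : ‖∫ s : ℝ, a s * Complex.exp (-n * (ζ - s) ^ 2)‖ ≤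
        Real.exp (n * ζ.im ^ 2) * √(Real.pi / n) := by
      rw [← hgauss ζ.re, ← integral_const_mul]
      refine norm_integral_le_of_norm_le ((hgint ζ.re).const_mul _) (.of_forall fun s => ?_)
      rw [norm_mul, ← norm_cexp_gaussian]
      exact mul_le_of_le_one_left (norm_nonneg _) (ha1 s)
    rw [norm_mul, Complex.norm_real, Real.norm_eq_abs, abs_of_pos hc0]
    calc c * _ ≤ c * (Real.exp (n * ζ.im ^ 2) * √(Real.pi / n)) := by gcongr
      _ = Real.exp (n * ζ.im ^ 2) := by rw [hc]; field_simp
      _ ≤ _ := by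
        apply Real.exp_le_exp.2
        have : ζ.im ^ 2 ≤ (Real.pi / 2) ^ 2 := sq_le_sq' (abs_le.1 hζ).1 (abs_le.1 hζ).2
        gcongr
  · have hint : Integrable (fun s : ℝ => a s * (Real.exp (-n * (t - s) ^ 2) : ℂ)) := by
      refine (hgint t).mono' (Continuous.aestronglyMeasurable (by fun_prop)) (.of_forall fun s => ?_)
      rw [norm_mul, Complex.norm_real, Real.norm_eq_abs, Real.abs_exp]
      exact mul_le_of_le_one_left (Real.exp_pos _).le (ha1 s)
    have hint2 : Integrable (fun s : ℝ => a t * (Real.exp (-n * (t - s) ^ 2) : ℂ)) :=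
      (hgint t).ofReal.const_mul _
    have heq : (c : ℂ) * (∫ s : ℝ, a s * Complex.exp (-n * (t - s) ^ 2)) - a t =
        c * ∫ s : ℝ, (a s - a t) * (Real.exp (-n * (t - s) ^ 2) : ℂ) := by
      have h2 : ∫ s : ℝ, a t * (Real.exp (-n * (t - s) ^ 2) : ℂ) = a t * (√(Real.pi / n) : ℝ) := by
        rw [integral_const_mul, integral_complex_ofReal, hgauss]
      simp_rw [sub_mul]
      rw [integral_sub hint hint2, h2, mul_sub, hc]
      have : ((√(Real.pi / n) : ℝ) : ℂ) ≠ 0 := by exact_mod_cast hsq.ne'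
      push_cast
      field_simp
    rw [heq, norm_mul, Complex.norm_real, Real.norm_eq_abs, abs_of_pos hc0]
    have hm : 0 < n / 2 := half_pos hn
    have hgauss2 : ∫ s : ℝ, Real.exp (-(n / 2) * (t - s) ^ 2) = √(Real.pi / (n / 2)) := by
      rw [integral_sub_left_eq_self (fun s : ℝ => Real.exp (-(n / 2) * s ^ 2)) volume t,
        integral_gaussian]
    -- `M |u| ≤ 1/4 + M² u²`, and one factor `exp (-n u² / 2)` absorbs `u²`
    have hbound : ∀ s : ℝ, ‖(a s - a t) * (Real.exp (-n * (t - s) ^ 2) : ℂ)‖ ≤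
        1 / 4 * Real.exp (-n * (t - s) ^ 2) + 1 / 6 * Real.exp (-(n / 2) * (t - s) ^ 2) := by
      intro s
      rw [norm_mul, Complex.norm_real, Real.norm_eq_abs, Real.abs_exp]
      have h1 : ‖a s - a t‖ ≤ 1 / 4 + M ^ 2 * (t - s) ^ 2 := by
        refine (hlip s t).trans ?_
        rw [abs_sub_comm, ← sq_abs (t - s)]
        nlinarith [sq_nonneg (M * |t - s| - 1 / 2)]
      have h2 : n / 2 * (t - s) ^ 2 ≤ Real.exp (n / 2 * (t - s) ^ 2) := by
        linarith [Real.add_one_le_exp (n / 2 * (t - s) ^ 2)]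
      have h3 : Real.exp (n / 2 * (t - s) ^ 2) * Real.exp (-n * (t - s) ^ 2) =
          Real.exp (-(n / 2) * (t - s) ^ 2) := by
        rw [← Real.exp_add]; congr 1; ring
      have h4 := mul_le_mul_of_nonneg_right h2 (Real.exp_pos (-n * (t - s) ^ 2)).le
      have h5 := mul_le_mul_of_nonneg_right h1 (Real.exp_pos (-n * (t - s) ^ 2)).le
      rw [h3] at h4
      have h6 : n / 2 * (t - s) ^ 2 = 6 * (M ^ 2 * (t - s) ^ 2) := by rw [hn_def]; ring
      rw [h6] at h4
      linarith
    have hI := norm_integral_le_of_norm_le (μ := volume)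
      (((hgint t).const_mul (1 / 4)).add
        (((integrable_exp_neg_mul_sq hm).comp_sub_left t).const_mul (1 / 6))) (.of_forall hbound)
    have hval : ∫ s : ℝ, (1 / 4 * Real.exp (-n * (t - s) ^ 2) +
        1 / 6 * Real.exp (-(n / 2) * (t - s) ^ 2)) =
        1 / 4 * √(Real.pi / n) + 1 / 6 * √(Real.pi / (n / 2)) := by
      rw [integral_add ((hgint t).const_mul (1 / 4))
        (((integrable_exp_neg_mul_sq hm).comp_sub_left t).const_mul (1 / 6)),
        integral_const_mul, integral_const_mul, hgauss, hgauss2]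
    have h32 : √(Real.pi / (n / 2)) ≤ 3 / 2 * √(Real.pi / n) := by
      rw [Real.sqrt_le_left (by positivity), mul_pow, Real.sq_sqrt (by positivity)]
      have : Real.pi / (n / 2) = 2 * (Real.pi / n) := by field_simp
      rw [this]
      have : 0 < Real.pi / n := by positivity
      linarith
    calc c * _ ≤ c * (1 / 4 * √(Real.pi / n) + 1 / 6 * √(Real.pi / (n / 2))) := by
          gcongr
          exact hI.trans hval.le
      _ ≤ c * (1 / 2 * √(Real.pi / n)) := by gcongr; linarith
      _ = 1 / 2 := by rw [hc]; field_simp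

/-! ### The integral estimate -/

theorem norm_exp_neg_I_mul_sub_le (α β : ℝ) :
    ‖Complex.exp (-(Complex.I * α)) - Complex.exp (-(Complex.I * β))‖ ≤ |α - β| := by
  have h : Complex.exp (-(Complex.I * α)) - Complex.exp (-(Complex.I * β)) =
      Complex.exp ((-β : ℝ) * Complex.I) *
        (Complex.exp (Complex.I * ((β - α : ℝ) : ℂ)) - 1) := by
    rw [mul_sub, mul_one, ← Complex.exp_add]
    congr 2 <;> push_cast <;> ring
  rw [h, norm_mul, Complex.norm_exp_ofReal_mul_I, one_mul, abs_sub_comm]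
  exact Real.norm_exp_I_mul_ofReal_sub_one_le

theorem exists_bounded_analytic_with_large_real_integral :
    ∃ C > (0:ℝ), ∃ C' ≥ (0:ℝ), ∀ φ : ℂ → ℂ,
      DifferentiableOn ℂ φ (Metric.ball (0:ℂ) 1) →
      Set.InjOn φ (Metric.ball (0:ℂ) 1) →
      deriv φ 0 = 1 →
      ∃ g : ℂ → ℂ, DifferentiableOn ℂ g (Metric.ball (0:ℂ) 1) ∧
        (∀ z ∈ Metric.ball (0:ℂ) 1, ‖g z‖ ≤ C) ∧
        ∀ r : ℝ, 0 ≤ r → r < 1 →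
          (1/C) * (∫ x in (0:ℝ)..r, ‖deriv φ (x:ℂ)‖) - C' ≤
            (∫ x in (0:ℝ)..r, g (x:ℂ) * deriv φ (x:ℂ)).re := by
  obtain ⟨C, hC, hG⟩ := exists_entire_approx 384 (by norm_num)
  refine ⟨max C 2, by positivity, 0, le_rfl, fun φ hφ hinj _ => ?_⟩
  have hφ' : DifferentiableOn ℂ (deriv φ) (ball 0 1) := hφ.deriv isOpen_ball
  obtain ⟨L, hL, hexp⟩ := exists_log_of_ne_zero hφ' fun z hz =>
    (hasDerivAt_invFunOn_of_injOn isOpen_ball hφ hinj hz).1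
  have hmem : ∀ x : ℝ, 0 ≤ x → x < 1 → (x : ℂ) ∈ ball (0 : ℂ) 1 := fun x h0 h1 => by
    rwa [mem_ball_zero_iff, Complex.norm_real, Real.norm_of_nonneg h0]
  -- `log φ'` along the radius, in the hyperbolic parameter `s = -log (1 - x)`
  set b : ℝ → ℂ := fun s => L ((1 - Real.exp (-s) : ℝ) : ℂ) with hb
  have hb' : ∀ s ∈ Ici (0 : ℝ), ∃ d : ℂ, HasDerivWithinAt b d (Ici 0) s ∧ ‖d‖ ≤ 384 := by
    intro s hs
    have hx0 : 0 ≤ 1 - Real.exp (-s) := by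
      have := Real.exp_le_one_iff.2 (neg_nonpos.2 (mem_Ici.1 hs)); linarith
    have hx1 : 1 - Real.exp (-s) < 1 := by linarith [Real.exp_pos (-s)]
    have hx := hmem _ hx0 hx1
    have hpath : HasDerivAt (fun s : ℝ => ((1 - Real.exp (-s) : ℝ) : ℂ))
        ((Real.exp (-s) : ℝ) : ℂ) s := by
      have := ((hasDerivAt_neg s).exp.const_sub 1).ofReal_comp
      simpa using this
    refine ⟨_, ((hL _ hx).comp s hpath).hasDerivWithinAt, ?_⟩
    have hne : 0 < ‖deriv φ ((1 - Real.exp (-s) : ℝ) : ℂ)‖ := by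
      rw [← hexp _ hx]; exact norm_pos_iff.2 (Complex.exp_ne_zero _)
    have := norm_deriv_deriv_le_at hφ hinj hx0 hx1
    rw [sub_sub_cancel] at this
    rw [norm_mul, norm_div, Complex.norm_real, Real.norm_eq_abs, Real.abs_exp, div_mul_eq_mul_div,
      div_le_iff₀ hne, mul_comm]
    exact this
  choose! d hd hdle using hb'
  have hblip : ∀ s ∈ Ici (0 : ℝ), ∀ t ∈ Ici (0 : ℝ), ‖b s - b t‖ ≤ 384 * |s - t| :=
    fun s hs t ht => (convex_Ici (0 : ℝ)).norm_image_sub_le_of_norm_hasDerivWithin_le hd hdle ht hs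
  -- the conjugate phase of `φ'` along the radius, extended by a constant to `s < 0`
  set a : ℝ → ℂ := fun s => Complex.exp (-(Complex.I * ((b (max s 0)).im : ℂ))) with ha
  obtain ⟨G, hGd, hGb, hGa⟩ := hG a
    (fun s => by
      rw [ha, Complex.norm_exp]; simp)
    (fun s t => by
      refine (norm_exp_neg_I_mul_sub_le _ _).trans ?_
      rw [← Complex.sub_im]
      refine (Complex.abs_im_le_norm _).trans
        ((hblip _ (mem_Ici.2 (le_max_right _ _)) _ (mem_Ici.2 (le_max_right _ _))).trans ?_)
      exact mul_le_mul_of_nonneg_left (abs_max_sub_max_le_abs s t 0) (by norm_num))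
  have hslit : ∀ z ∈ ball (0 : ℂ) 1, 0 < (1 - z).re := by
    intro z hz
    rw [mem_ball_zero_iff] at hz
    have := Complex.re_le_norm z
    simp only [Complex.sub_re, Complex.one_re]
    linarith
  set g : ℂ → ℂ := fun z => G (-Complex.log (1 - z)) with hg
  have hgd : DifferentiableOn ℂ g (ball 0 1) :=
    hGd.comp_differentiableOn
      (((differentiableOn_id.const_sub 1).clog fun z hz => Or.inl (hslit z hz)).neg)
  refine ⟨g, hgd, fun z hz => ?_, fun r hr0 hr1 => ?_⟩
  · refine (hGb _ ?_).trans (le_max_left _ _)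
    rw [Complex.neg_im, abs_neg, Complex.log_im]
    exact Complex.abs_arg_le_pi_div_two_iff.2 (hslit z hz).le
  have hpt : ∀ x : ℝ, 0 ≤ x → x < 1 → 1 / 2 * ‖deriv φ x‖ ≤ (g x * deriv φ x).re := by
    intro x hx0 hx1
    have hlog : -Complex.log (1 - x) = ((-Real.log (1 - x) : ℝ) : ℂ) := by
      push_cast
      rw [Complex.ofReal_log (by linarith)]
      push_cast
      rfl
    have ht : 0 ≤ -Real.log (1 - x) := by
      have := Real.log_nonpos (by linarith : 0 ≤ 1 - x) (by linarith); linarith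
    have hbx : b (max (-Real.log (1 - x)) 0) = L x := by
      rw [max_eq_left ht, hb]
      simp only [neg_neg]
      rw [Real.exp_log (by linarith), sub_sub_cancel]
    set t := -Real.log (1 - x) with ht_def
    have hgx : g x = G t := by rw [hg]; simp only; rw [hlog]
    have hrot : a t * deriv φ x = (‖deriv φ x‖ : ℂ) := by
      rw [← hexp x (hmem x hx0 hx1), ha]
      simp only [hbx]
      rw [Complex.norm_exp, ← Complex.exp_add, Complex.ofReal_exp]
      congr 1
      apply Complex.ext <;> simp
    have hsplit : g x * deriv φ x = (‖deriv φ x‖ : ℂ) + (G t - a t) * deriv φ x := by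
      rw [← hrot, hgx]; ring
    have herr : ‖(G t - a t) * deriv φ x‖ ≤ 1 / 2 * ‖deriv φ x‖ := by
      rw [norm_mul]; gcongr; exact hGa t
    rw [hsplit, Complex.add_re, Complex.ofReal_re]
    have := (abs_le.1 ((Complex.abs_re_le_norm _).trans herr)).1
    linarith
  have hcφ : ContinuousOn (fun x : ℝ => deriv φ x) (uIcc 0 r) := by
    refine hφ'.continuousOn.comp Complex.continuous_ofReal.continuousOn fun x hx => ?_
    rw [uIcc_of_le hr0] at hx
    exact hmem x hx.1 (hx.2.trans_lt hr1)
  have hcg : ContinuousOn (fun x : ℝ => g x) (uIcc 0 r) := by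
    refine hgd.continuousOn.comp Complex.continuous_ofReal.continuousOn fun x hx => ?_
    rw [uIcc_of_le hr0] at hx
    exact hmem x hx.1 (hx.2.trans_lt hr1)
  have hre : (∫ x in (0:ℝ)..r, g x * deriv φ x).re = ∫ x in (0:ℝ)..r, (g x * deriv φ x).re := by
    have hi : IntervalIntegrable (fun x : ℝ => g x * deriv φ x) volume 0 r :=
      (hcg.mul hcφ).intervalIntegrable
    have := Complex.reCLM.intervalIntegral_comp_comm hi
    simpa using this.symm
  have hmono : 1 / 2 * (∫ x in (0:ℝ)..r, ‖deriv φ x‖) ≤ ∫ x in (0:ℝ)..r, (g x * deriv φ x).re := by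
    rw [← intervalIntegral.integral_const_mul]
    refine intervalIntegral.integral_mono_on hr0
      (hcφ.norm.intervalIntegrable.const_mul _)
      (Complex.continuous_re.comp_continuousOn (hcg.mul hcφ)).intervalIntegrable
      fun x hx => hpt x hx.1 (hx.2.trans_lt hr1)
  rw [hre, sub_zero]
  refine le_trans ?_ hmono
  gcongr
  · exact intervalIntegral.integral_nonneg hr0 fun x _ => norm_nonneg _
  · exact le_max_right _ _
end

section
/- There is an absolute constant c > 0 such that for every real N ≥ 1 and every function φ : [−1, 1] → ℝ that is Lipschitz with constant N, there exists a polynomial P of degree at most ⌈N^{3/2}⌉ with |φ(x) − P(x)| ≤ c N^{−1/2} for all x ∈ [−1, 1]. -/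
/-!
With `x = cos θ`, a polynomial of degree `< n` in `x` is an even trigonometric polynomial of
degree `< n` in `θ`. Put `a k = sin (k π / n)` and let
`K s = |∑ k < n, a k e^{iks}|²`, a nonnegative trigonometric polynomial of degree `< n`. The
approximant is a discrete convolution of `φ ∘ cos` with `K`, made even in `θ`:
`P (cos θ) = ∑ j < n, φ (cos t_j) (K (θ + t_j) + K (θ - t_j)) / (2 n ∑ a²)`, `t_j = 2 π j / n`.
It is a polynomial in `cos θ` because
`cos (m (θ + t)) + cos (m (θ - t)) = 2 cos (m t) cos (m θ)` and `cos (m θ) = T_m (cos θ)`.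

The weights are nonnegative, and both the identities they satisfy come from discrete Parseval
(`parseval`): the weights have sum `1`, and since `a 0 = a n = 0`, summation by parts gives
`|1 - e^{is}|² K s = |∑ k < n, (a (k+1) - a k) e^{iks}|²`, so the weighted mean of
`|1 - e^{i(θ ± t_j)}|² ≥ (cos θ - cos t_j)²` is `∑ (a (k+1) - a k)² / ∑ a k² ≤ 2 π² / n²`.
Hence the weighted mean of `|cos θ - cos t_j|` is `O(1/n)` and the error is `O(N/n)`
(`jackson`). Finally `n = ⌈N^{3/2}⌉ + 1`.
-/

/-- Discrete Parseval identity on a rotated set of `n`-th roots of unity. -/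
lemma parseval (n : ℕ) (ω u : ℂ) (hω : IsPrimitiveRoot ω n) (hω1 : ‖ω‖ = 1)
    (hu : ‖u‖ = 1) (b : ℕ → ℝ) :
    ∑ j ∈ Finset.range n, Complex.normSq (∑ k ∈ Finset.range n, (b k : ℂ) * (u * ω ^ j) ^ k)
      = n * ∑ k ∈ Finset.range n, b k ^ 2 := by
  have hcω : ω * (starRingEnd ℂ) ω = 1 := by
    rw [Complex.mul_conj, Complex.normSq_eq_norm_sq, hω1]; simp
  have hcu : u * (starRingEnd ℂ) u = 1 := by
    rw [Complex.mul_conj, Complex.normSq_eq_norm_sq, hu]; simp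
  have orth : ∀ k ∈ Finset.range n, ∀ l ∈ Finset.range n,
      ∑ j ∈ Finset.range n, (ω ^ k * (starRingEnd ℂ) ω ^ l) ^ j = if k = l then (n : ℂ) else 0 := by
    intro k hk l hl
    split_ifs with h
    · subst h
      simp [← mul_pow, hcω]
    · set r := ω ^ k * (starRingEnd ℂ) ω ^ l with hr
      have hrn : r ^ n = 1 := by
        rw [hr, mul_pow, ← pow_mul, ← pow_mul, mul_comm k, mul_comm l, pow_mul, pow_mul,
          hω.pow_eq_one, ← map_pow, hω.pow_eq_one]; simp
      have hr1 : r ≠ 1 := by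
        intro h1
        apply h
        apply hω.pow_inj (Finset.mem_range.1 hk) (Finset.mem_range.1 hl)
        calc ω ^ k = ω ^ k * (ω * (starRingEnd ℂ) ω) ^ l := by rw [hcω]; simp
          _ = r * ω ^ l := by rw [hr, mul_pow]; ring
          _ = ω ^ l := by rw [h1, one_mul]
      have := mul_geom_sum r n
      rw [hrn, sub_self] at this
      exact (mul_eq_zero.1 this).resolve_left (sub_ne_zero.2 hr1)
  apply Complex.ofReal_injective
  push_cast
  simp_rw [Complex.normSq_eq_conj_mul_self, map_sum, Finset.sum_mul_sum]
  rw [Finset.sum_comm, Finset.mul_sum]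
  refine Finset.sum_congr rfl fun l hl => ?_
  rw [Finset.sum_comm]
  have : ∀ k ∈ Finset.range n, ∑ j ∈ Finset.range n,
      (starRingEnd ℂ) ((b l : ℂ) * (u * ω ^ j) ^ l) * ((b k : ℂ) * (u * ω ^ j) ^ k)
      = b l * b k * (starRingEnd ℂ) u ^ l * u ^ k * (if k = l then (n : ℂ) else 0) := by
    intro k hk
    rw [← orth k hk l hl, Finset.mul_sum]
    refine Finset.sum_congr rfl fun j _ => ?_
    simp only [map_mul, map_pow, Complex.conj_ofReal, mul_pow, ← pow_mul]
    rw [mul_comm j l, mul_comm j k]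
    ring
  rw [Finset.sum_congr rfl this]
  simp only [mul_ite, mul_zero, Finset.sum_ite_eq', hl, if_true]
  calc (b l : ℂ) * b l * (starRingEnd ℂ) u ^ l * u ^ l * n
      = b l * b l * (u * (starRingEnd ℂ) u) ^ l * n := by rw [mul_pow]; ring
    _ = _ := by rw [hcu]; ring

/-- The kernel `|∑ k < n, a k e^{iks}|²`. -/
noncomputable def ker (n : ℕ) (a : ℕ → ℝ) (s : ℝ) : ℝ :=
  Complex.normSq (∑ k ∈ Finset.range n, (a k : ℂ) * Complex.exp (s * Complex.I) ^ k)

lemma ker_eq (n : ℕ) (a : ℕ → ℝ) (s : ℝ) :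
    ker n a s = ∑ k ∈ Finset.range n, ∑ l ∈ Finset.range n,
      a k * a l * Real.cos ((k - l : ℤ) * s) := by
  have h : ∀ k : ℕ, Complex.exp (s * Complex.I) ^ k
      = (Real.cos (k * s) : ℂ) + (Real.sin (k * s) : ℂ) * Complex.I := by
    intro k
    rw [← Complex.exp_nat_mul, ← mul_assoc, Complex.exp_mul_I]
    push_cast; rfl
  unfold ker
  simp_rw [h]
  rw [Complex.normSq_apply]
  simp only [Complex.re_sum, Complex.im_sum, Complex.re_ofReal_mul, Complex.im_ofReal_mul,
    Complex.add_re, Complex.add_im, Complex.ofReal_re, Complex.ofReal_im, Complex.mul_I_re,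
    Complex.mul_I_im, neg_zero, add_zero, zero_add]
  rw [Finset.sum_mul_sum, Finset.sum_mul_sum, ← Finset.sum_add_distrib]
  refine Finset.sum_congr rfl fun k _ => ?_
  rw [← Finset.sum_add_distrib]
  refine Finset.sum_congr rfl fun l _ => ?_
  push_cast
  rw [sub_mul, Real.cos_sub]
  ring

lemma ker_nonneg (n : ℕ) (a : ℕ → ℝ) (s : ℝ) : 0 ≤ ker n a s := Complex.normSq_nonneg _

/-- Parseval for the kernel at the equally spaced nodes `θ + 2 π j / n`. -/
lemma sum_ker (n : ℕ) (hn : n ≠ 0) (a : ℕ → ℝ) (θ : ℝ) :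
    ∑ j ∈ Finset.range n, ker n a (θ + 2 * Real.pi * j / n)
      = n * ∑ k ∈ Finset.range n, a k ^ 2 := by
  have hω := Complex.isPrimitiveRoot_exp n hn
  rw [← parseval n _ (Complex.exp (θ * Complex.I)) hω (hω.norm'_eq_one hn)
    (Complex.norm_exp_ofReal_mul_I θ) a]
  refine Finset.sum_congr rfl fun j _ => ?_
  unfold ker
  rw [← Complex.exp_nat_mul, ← Complex.exp_add]
  have hz : Complex.exp (((θ + 2 * Real.pi * j / n : ℝ) : ℂ) * Complex.I)
      = Complex.exp (θ * Complex.I + j * (2 * Real.pi * Complex.I / n)) := by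
    congr 1
    push_cast
    ring
  rw [hz]

/-- Summation by parts: multiplying the kernel by `|1 - e^{is}|² = 2 (1 - cos s)` replaces the
coefficients by their differences. -/
lemma ker_diff (n : ℕ) (a : ℕ → ℝ) (h0 : a 0 = 0) (hn : a n = 0) (s : ℝ) :
    2 * (1 - Real.cos s) * ker n a s = ker n (fun k => a (k + 1) - a k) s := by
  unfold ker
  set z := Complex.exp (s * Complex.I) with hz
  have hz1 : Complex.normSq z = 1 := by
    rw [Complex.normSq_eq_norm_sq, Complex.norm_exp_ofReal_mul_I]; norm_num
  have h1z : Complex.normSq (1 - z) = 2 * (1 - Real.cos s) := by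
    rw [Complex.normSq_sub, hz1, map_one, one_mul, Complex.conj_re, hz,
      Complex.exp_ofReal_mul_I_re]
    ring
  rw [← h1z, ← Complex.normSq_mul]
  -- the unimodular factor `z` aligns the shifted sum with the range `k < n`
  rw [← one_mul (Complex.normSq (∑ k ∈ Finset.range n, ((a (k + 1) - a k : ℝ) : ℂ) * z ^ k)),
    ← hz1, ← Complex.normSq_mul]
  congr 1
  have hs : ∑ k ∈ Finset.range n, (a (k + 1) : ℂ) * z ^ (k + 1)
      = ∑ k ∈ Finset.range n, (a k : ℂ) * z ^ k := by
    have h1 := Finset.sum_range_succ (fun k => (a k : ℂ) * z ^ k) n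
    have h2 := Finset.sum_range_succ' (fun k => (a k : ℂ) * z ^ k) n
    simp only [hn, h0, Complex.ofReal_zero, zero_mul, add_zero] at h1 h2
    rw [← h1, h2]
  rw [sub_mul, one_mul]
  nth_rewrite 1 [← hs]
  rw [Finset.mul_sum, Finset.mul_sum, ← Finset.sum_sub_distrib]
  refine Finset.sum_congr rfl fun k _ => ?_
  push_cast
  ring

lemma cos_sub_cos_sq_le (x y : ℝ) :
    (Real.cos x - Real.cos y) ^ 2 ≤ 2 * (1 - Real.cos (x + y)) := by
  rw [Real.cos_add]
  nlinarith [sq_nonneg (Real.sin x + Real.sin y), Real.sin_sq_add_cos_sq x,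
    Real.sin_sq_add_cos_sq y]

lemma sum_sin_sq (n : ℕ) (hn : 2 ≤ n) :
    ∑ k ∈ Finset.range n, Real.sin (k * Real.pi / n) ^ 2 = n / 2 := by
  have hn0 : n ≠ 0 := by omega
  have h := (Complex.isPrimitiveRoot_exp n hn0).geom_sum_eq_zero (by omega)
  have h2 : ∑ k ∈ Finset.range n, Real.cos (2 * (k * Real.pi / n)) = 0 := by
    have h3 := congrArg Complex.re h
    rw [Complex.re_sum, Complex.zero_re] at h3
    rw [← h3]
    refine Finset.sum_congr rfl fun k _ => ?_
    rw [← Complex.exp_nat_mul, ← Complex.exp_ofReal_mul_I_re]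
    congr 2
    push_cast
    ring
  have h4 : ∀ k ∈ Finset.range n, Real.sin (k * Real.pi / n) ^ 2
      = 1 / 2 - Real.cos (2 * (k * Real.pi / n)) / 2 := fun k _ => Real.sin_sq_eq_half_sub _
  rw [Finset.sum_congr rfl h4, Finset.sum_sub_distrib,
    ← Finset.sum_div _ (fun k : ℕ => Real.cos (2 * (k * Real.pi / n))), h2]
  simp
  ring

/-- Jackson's theorem for Lipschitz functions: degree `< n` gives error `O(N/n)`. -/
lemma jackson (n : ℕ) (hn : 2 ≤ n) (N : ℝ) (hN : 0 ≤ N) (φ : ℝ → ℝ)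
    (hφ : ∀ s ∈ Set.Icc (-1:ℝ) 1, ∀ t ∈ Set.Icc (-1:ℝ) 1, |φ s - φ t| ≤ N * |s - t|) :
    ∃ P : Polynomial ℝ, P.natDegree ≤ n - 1 ∧
      ∀ x ∈ Set.Icc (-1:ℝ) 1, |φ x - P.eval x| ≤ N * (11 / n) := by
  have hn0 : n ≠ 0 := by omega
  have hnpos : (0:ℝ) < n := by positivity
  set a : ℕ → ℝ := fun k => Real.sin (k * Real.pi / n) with ha
  have ha0 : a 0 = 0 := by simp [ha]
  have han : a n = 0 := by
    simp only [ha]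
    rw [mul_div_assoc, mul_div_cancel₀ _ hnpos.ne', Real.sin_pi]
  have hsq : ∑ k ∈ Finset.range n, a k ^ 2 = n / 2 := sum_sin_sq n hn
  have hdiff : ∑ k ∈ Finset.range n, (a (k + 1) - a k) ^ 2 ≤ Real.pi ^ 2 / n := by
    calc ∑ k ∈ Finset.range n, (a (k + 1) - a k) ^ 2
        ≤ ∑ k ∈ Finset.range n, (Real.pi / n) ^ 2 := by
          refine Finset.sum_le_sum fun k _ => ?_
          rw [← sq_abs (a (k + 1) - a k)]
          refine pow_le_pow_left₀ (abs_nonneg _) ?_ 2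
          have := Real.abs_sin_sub_sin_le ((k + 1 : ℕ) * Real.pi / n) (k * Real.pi / n)
          refine this.trans (le_of_eq ?_)
          rw [show ((k + 1 : ℕ) : ℝ) * Real.pi / n - k * Real.pi / n = Real.pi / n by
            push_cast; ring]
          exact abs_of_nonneg (by positivity)
      _ = Real.pi ^ 2 / n := by
          rw [Finset.sum_const, Finset.card_range, nsmul_eq_mul]; field_simp
  set t : ℕ → ℝ := fun j => 2 * Real.pi * j / n with ht
  -- the normalising constant of the weights is `n * ∑ a k ^ 2 = n ^ 2 / 2`
  set P : Polynomial ℝ := ∑ j ∈ Finset.range n, ∑ k ∈ Finset.range n, ∑ l ∈ Finset.range n,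
    Polynomial.C (2 / (n:ℝ) ^ 2 * φ (Real.cos (t j)) *
      (a k * a l * Real.cos ((k - l : ℤ) * t j))) *
        Polynomial.Chebyshev.T ℝ (k - l : ℤ) with hP
  refine ⟨P, ?_, ?_⟩
  · refine Polynomial.natDegree_sum_le_of_forall_le _ _ fun j _ =>
      Polynomial.natDegree_sum_le_of_forall_le _ _ fun k hk =>
      Polynomial.natDegree_sum_le_of_forall_le _ _ fun l hl => ?_
    refine (Polynomial.natDegree_C_mul_le _ _).trans ?_
    rw [Polynomial.Chebyshev.natDegree_T]
    have := Finset.mem_range.1 hk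
    have := Finset.mem_range.1 hl
    omega
  intro x hx
  obtain ⟨θ, rfl⟩ : ∃ θ, Real.cos θ = x := ⟨Real.arccos x, Real.cos_arccos hx.1 hx.2⟩
  -- the kernel is even, so `K (-θ + t)` is `K (θ - t)`; this form lets `sum_ker` apply at `-θ`
  set w : ℕ → ℝ := fun j => (ker n a (θ + t j) + ker n a (-θ + t j)) / (n:ℝ) ^ 2 with hw
  have hw0 : ∀ j, 0 ≤ w j := fun j =>
    div_nonneg (add_nonneg (ker_nonneg _ _ _) (ker_nonneg _ _ _)) (by positivity)
  have hw1 : ∑ j ∈ Finset.range n, w j = 1 := by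
    simp only [hw]
    rw [← Finset.sum_div, Finset.sum_add_distrib, sum_ker n hn0 a θ, sum_ker n hn0 a (-θ), hsq]
    field_simp
    norm_num
  have hw2 : ∑ j ∈ Finset.range n, w j * (Real.cos θ - Real.cos (t j)) ^ 2
      ≤ 2 * Real.pi ^ 2 / n ^ 2 := by
    set b : ℕ → ℝ := fun k => a (k + 1) - a k with hb
    calc ∑ j ∈ Finset.range n, w j * (Real.cos θ - Real.cos (t j)) ^ 2
        ≤ ∑ j ∈ Finset.range n, (ker n b (θ + t j) + ker n b (-θ + t j)) / (n:ℝ) ^ 2 := by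
          refine Finset.sum_le_sum fun j _ => ?_
          rw [hb, ← ker_diff n a ha0 han, ← ker_diff n a ha0 han]
          simp only [hw]
          rw [div_mul_eq_mul_div]
          have h1 := cos_sub_cos_sq_le θ (t j)
          have h2 := cos_sub_cos_sq_le (-θ) (t j)
          rw [Real.cos_neg] at h2
          refine div_le_div_of_nonneg_right ?_ (by positivity)
          have h3 := mul_le_mul_of_nonneg_right h1 (ker_nonneg n a (θ + t j))
          have h4 := mul_le_mul_of_nonneg_right h2 (ker_nonneg n a (-θ + t j))
          linarith
      _ = 2 * (∑ k ∈ Finset.range n, b k ^ 2) / n := by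
          rw [← Finset.sum_div, Finset.sum_add_distrib, sum_ker n hn0 b θ, sum_ker n hn0 b (-θ)]
          field_simp
          ring
      _ ≤ 2 * (Real.pi ^ 2 / n) / n := by gcongr
      _ = _ := by field_simp
  have hPe : P.eval (Real.cos θ) = ∑ j ∈ Finset.range n, w j * φ (Real.cos (t j)) := by
    simp only [hP, Polynomial.eval_finsetSum, Polynomial.eval_mul, Polynomial.eval_C,
      Polynomial.Chebyshev.T_real_cos]
    refine Finset.sum_congr rfl fun j _ => ?_
    simp only [hw]
    rw [ker_eq, ker_eq, ← Finset.sum_add_distrib, Finset.sum_div, Finset.sum_mul]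
    refine Finset.sum_congr rfl fun k _ => ?_
    rw [← Finset.sum_add_distrib, Finset.sum_div, Finset.sum_mul]
    refine Finset.sum_congr rfl fun l _ => ?_
    rw [mul_add, mul_add, Real.cos_add, Real.cos_add, mul_neg, Real.cos_neg, Real.sin_neg]
    ring
  have hdecomp : φ (Real.cos θ) - P.eval (Real.cos θ)
      = ∑ j ∈ Finset.range n, w j * (φ (Real.cos θ) - φ (Real.cos (t j))) := by
    rw [hPe]
    simp only [mul_sub]
    rw [Finset.sum_sub_distrib, ← Finset.sum_mul, hw1, one_mul]
  rw [hdecomp]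
  calc |∑ j ∈ Finset.range n, w j * (φ (Real.cos θ) - φ (Real.cos (t j)))|
      ≤ ∑ j ∈ Finset.range n, |w j * (φ (Real.cos θ) - φ (Real.cos (t j)))| :=
        Finset.abs_sum_le_sum_abs _ _
    _ ≤ ∑ j ∈ Finset.range n, N * ((1 / n) / 2 * w j
          + n / 2 * (w j * (Real.cos θ - Real.cos (t j)) ^ 2)) := by
        refine Finset.sum_le_sum fun j _ => ?_
        rw [abs_mul, abs_of_nonneg (hw0 j)]
        set d := Real.cos θ - Real.cos (t j) with hd
        -- arithmetic-geometric mean at the scale `1 / n`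
        have hamgm : |d| ≤ (1 / n) / 2 + n / 2 * d ^ 2 := by
          have h1 : 0 ≤ (n * |d| - 1) ^ 2 / (2 * n) := by positivity
          have h2 : (n * |d| - 1) ^ 2 / (2 * n) = (1 / n) / 2 + n / 2 * d ^ 2 - |d| := by
            rw [← sq_abs d]; field_simp; ring
          linarith
        calc w j * |φ (Real.cos θ) - φ (Real.cos (t j))|
            ≤ w j * (N * |d|) := mul_le_mul_of_nonneg_left
              (hφ _ (Real.cos_mem_Icc _) _ (Real.cos_mem_Icc _)) (hw0 j)
          _ ≤ w j * (N * ((1 / n) / 2 + n / 2 * d ^ 2)) :=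
              mul_le_mul_of_nonneg_left (mul_le_mul_of_nonneg_left hamgm hN) (hw0 j)
          _ = _ := by ring
    _ = N * ((1 / n) / 2 + n / 2 *
          ∑ j ∈ Finset.range n, w j * (Real.cos θ - Real.cos (t j)) ^ 2) := by
        rw [← Finset.mul_sum, Finset.sum_add_distrib, ← Finset.mul_sum, ← Finset.mul_sum, hw1,
          mul_one]
    _ ≤ N * ((1 / n) / 2 + n / 2 * (2 * Real.pi ^ 2 / n ^ 2)) := by gcongr
    _ = N * ((1 / 2 + Real.pi ^ 2) / n) := by field_simp
    _ ≤ N * (11 / n) := by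
        gcongr
        nlinarith [Real.pi_lt_d2, Real.pi_pos]

/-- Jackson-type approximation: a function on `[-1,1]` that is Lipschitz with constant `N`
can be approximated by a polynomial of degree at most `⌈N^{3/2}⌉` with error `≤ c N^{-1/2}`. -/
theorem lipschitz_poly_approx :
    ∃ c > (0:ℝ), ∀ N : ℝ, 1 ≤ N → ∀ φ : ℝ → ℝ,
      (∀ s ∈ Set.Icc (-1:ℝ) 1, ∀ t ∈ Set.Icc (-1:ℝ) 1, |φ s - φ t| ≤ N * |s - t|) →
      ∃ P : Polynomial ℝ, P.natDegree ≤ ⌈N ^ ((3:ℝ)/2)⌉₊ ∧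
        ∀ x ∈ Set.Icc (-1:ℝ) 1, |φ x - P.eval x| ≤ c * N ^ (-(1:ℝ)/2) := by
  refine ⟨11, by norm_num, fun N hN φ hφ => ?_⟩
  have hN0 : 0 < N := by linarith
  have hpos : 0 < N ^ ((3:ℝ)/2) := Real.rpow_pos_of_pos hN0 _
  have hceil : 0 < ⌈N ^ ((3:ℝ)/2)⌉₊ := Nat.ceil_pos.2 hpos
  obtain ⟨P, hdeg, hP⟩ := jackson (⌈N ^ ((3:ℝ)/2)⌉₊ + 1) (by omega) N hN0.le φ hφ
  refine ⟨P, by simpa using hdeg, fun x hx => (hP x hx).trans ?_⟩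
  have hle : N ^ ((3:ℝ)/2) ≤ ((⌈N ^ ((3:ℝ)/2)⌉₊ + 1 : ℕ) : ℝ) := by
    push_cast
    linarith [Nat.le_ceil (N ^ ((3:ℝ)/2))]
  calc N * (11 / ((⌈N ^ ((3:ℝ)/2)⌉₊ + 1 : ℕ) : ℝ)) ≤ N * (11 / N ^ ((3:ℝ)/2)) := by gcongr
    _ = 11 * (N ^ (1:ℝ) / N ^ ((3:ℝ)/2)) := by rw [Real.rpow_one]; ring
    _ = 11 * N ^ (-(1:ℝ)/2) := by rw [← Real.rpow_sub hN0]; norm_num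
end

section
/- Let P be a polynomial (with complex coefficients) of degree d ≥ 1 such that |P(x)| ≤ 1 for all real x ∈ [−1, 1]. Then for every complex z with |z| ≥ 1 one has |P(z)| ≤ (16|z|)^d. -/
/-!
The proof uses the Joukowski substitution `z = (w + w⁻¹) / 2`. Clearing denominators,
`Q(w) = w ^ d * P((w + w⁻¹) / 2)` is a polynomial in `w`. For `|w| = 1` the point `(w + w⁻¹) / 2`
is `re w ∈ [-1, 1]`, so `|Q| ≤ 1` on the unit circle, hence on the unit disc by the maximum
principle. Every `z` has a preimage `w` with `0 < |w| ≤ 1`, which gives `|P(z)| ≤ |w|⁻¹ ^ d`, and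
`|w|⁻¹ ≤ 2|z| + |w| ≤ 3|z|` when `|z| ≥ 1`. The constant obtained is thus `3` in place of `16`.
-/

/-- The denominator-free form of `w ^ P.natDegree * P((w + w⁻¹) / 2)`, defined also at `w = 0`. -/
noncomputable def joukowskiPullback (P : Polynomial ℂ) (w : ℂ) : ℂ :=
  ∑ k ∈ Finset.range (P.natDegree + 1),
    P.coeff k * (w ^ (P.natDegree - k) * ((w ^ 2 + 1) / 2) ^ k)

lemma joukowskiPullback_eq (P : Polynomial ℂ) {w : ℂ} (hw : w ≠ 0) :
    joukowskiPullback P w = w ^ P.natDegree * P.eval ((w + w⁻¹) / 2) := by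
  rw [joukowskiPullback, Polynomial.eval_eq_sum_range, Finset.mul_sum]
  refine Finset.sum_congr rfl fun k hk => ?_
  have hk' : k ≤ P.natDegree := Nat.lt_succ_iff.mp (Finset.mem_range.mp hk)
  have h1 : (w ^ 2 + 1) / 2 = w * ((w + w⁻¹) / 2) := by field_simp
  rw [h1, mul_pow, ← pow_sub_mul_pow w hk']
  ring

lemma norm_joukowskiPullback_le_one (P : Polynomial ℂ)
    (hP : ∀ x : ℝ, x ∈ Set.Icc (-1:ℝ) 1 → ‖P.eval (x:ℂ)‖ ≤ 1) {w : ℂ} (hw : ‖w‖ ≤ 1) :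
    ‖joukowskiPullback P w‖ ≤ 1 := by
  have hdiff : Differentiable ℂ (joukowskiPullback P) := by
    unfold joukowskiPullback
    fun_prop
  refine Complex.norm_le_of_forall_mem_frontier_norm_le (U := Metric.ball 0 1)
    Metric.isBounded_ball hdiff.diffContOnCl (fun u hu => ?_) ?_
  · rw [frontier_ball (0 : ℂ) one_ne_zero, mem_sphere_zero_iff_norm] at hu
    have hu0 : u ≠ 0 := norm_ne_zero_iff.mp (by rw [hu]; exact one_ne_zero)
    have hre : (u + u⁻¹) / 2 = ((u.re : ℝ) : ℂ) := by
      rw [Complex.inv_eq_conj hu, Complex.add_conj]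
      push_cast
      ring
    rw [joukowskiPullback_eq P hu0, norm_mul, norm_pow, hu, one_pow, one_mul, hre]
    exact hP _ (abs_le.mp (hu ▸ Complex.abs_re_le_norm u))
  · rwa [closure_ball (0 : ℂ) one_ne_zero, mem_closedBall_zero_iff]

lemma exists_joukowski_preimage (z : ℂ) : ∃ w : ℂ, w ≠ 0 ∧ ‖w‖ ≤ 1 ∧ (w + w⁻¹) / 2 = z := by
  obtain ⟨s, hs⟩ := IsAlgClosed.exists_pow_nat_eq (z ^ 2 - 1) (n := 2) two_pos
  have hprod : (z + s) * (z - s) = 1 := by linear_combination -hs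
  have h0 : z + s ≠ 0 := left_ne_zero_of_mul_eq_one hprod
  have hinv : (z + s)⁻¹ = z - s := inv_eq_of_mul_eq_one_right hprod
  -- The two preimages `z + s` and `z - s` are mutually inverse, so one lies in the closed disc.
  rcases le_total ‖z + s‖ 1 with h | h
  · exact ⟨z + s, h0, h, by rw [hinv]; ring⟩
  · refine ⟨(z + s)⁻¹, inv_ne_zero h0, ?_, by rw [inv_inv, hinv]; ring⟩
    rw [norm_inv]
    exact inv_le_one_of_one_le₀ h

/-- If a polynomial `P` of degree `d ≥ 1` satisfies `|P| ≤ 1` on `[-1,1]`, then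
`|P(z)| ≤ (16|z|)^d` for `|z| ≥ 1`. -/
theorem poly_growth_bound (P : Polynomial ℂ) (d : ℕ) (hd : P.natDegree = d)
    (hd1 : 1 ≤ d)
    (hP : ∀ x : ℝ, x ∈ Set.Icc (-1:ℝ) 1 → ‖P.eval (x:ℂ)‖ ≤ 1) :
    ∀ z : ℂ, 1 ≤ ‖z‖ → ‖P.eval z‖ ≤ (16 * ‖z‖) ^ d := by
  intro z hz
  obtain ⟨w, hw0, hw1, hwz⟩ := exists_joukowski_preimage z
  have hQ := norm_joukowskiPullback_le_one P hP hw1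
  rw [joukowskiPullback_eq P hw0, hwz, hd, norm_mul, norm_pow] at hQ
  have hwpos : 0 < ‖w‖ := norm_pos_iff.mpr hw0
  have hinv : ‖w‖⁻¹ ≤ 16 * ‖z‖ := by
    have h1 : w⁻¹ = 2 * z - w := by rw [← hwz]; ring
    have h2 : ‖w⁻¹‖ ≤ ‖2 * z‖ + ‖w‖ := h1 ▸ norm_sub_le (2 * z) w
    rw [norm_inv, norm_mul, Complex.norm_ofNat] at h2
    linarith
  calc ‖P.eval z‖ ≤ (‖w‖ ^ d)⁻¹ := by
        rw [← one_div, le_div_iff₀ (pow_pos hwpos d), mul_comm]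
        exact hQ
    _ = ‖w‖⁻¹ ^ d := (inv_pow _ _).symm
    _ ≤ (16 * ‖z‖) ^ d := by gcongr
end
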